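/- arXiv:2306.00511 — 4 statements merged into one kernel-verified Lean document; each statement's English description precedes it below -/
import Mathlib

section
/- Let V ∈ 𝒫^{s,p}_q(ℝⁿ), g ∈ W^{s,p}(ℝⁿ), K ∈ 𝒦_p. If u ∈ Y^{s,p}_g(Ω)^+ is a weak supersolution of L^p_K u + V|u|^{p−2}u = 0 in Ω with exterior data g, and u ≥ 0 in B_R(x₀) ⊂ Ω, then there is a constant c₀ > 0 depending only on n, s, p, λ, Λ and Ω such that for every b ∈ (0,1) and every r ∈ (0, R/2): ∬_{B_r(x₀)×B_r(x₀)} | ln( (u(x)+b)/(u(y)+b) ) |^p · K(x−y) dx dy ≤ c₀ · r^{n−ps} · [ b^{−(p−1)}·(r/R)^{ps}·[𝒯_R(u_−;x₀)]^{p−1} + (1 + ‖V_+‖_{L^q(Ω)}) ], where u_− = max{−u,0}. -/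
open MeasureTheory Real Set Metric Filter ENNReal

noncomputable section

abbrev Rn (n : ℕ) : Type := EuclideanSpace ℝ (Fin n)

namespace NLS

/-- The normalization constant `c_{n,p,s}`. -/
def cnps (n : ℕ) (p s : ℝ) : ℝ :=
  Real.Gamma (((n : ℝ) + p) / 2) * p * (1 - s) /
    (Real.pi ^ (((n : ℝ) - 1) / 2) * Real.Gamma ((p + 1) / 2))

/-- Membership in the kernel class `𝒦_p`. -/
def KernelClass (n : ℕ) (p s lam Lam : ℝ) (K : Rn n → ℝ) : Prop :=
  Measurable K ∧ (∀ y, K (-y) = K y) ∧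
    ∀ y : Rn n, y ≠ 0 →
      cnps n p s * lam * ‖y‖ ^ (-(n : ℝ) - p * s) ≤ K y ∧
        K y ≤ cnps n p s * Lam * ‖y‖ ^ (-(n : ℝ) - p * s)

/-- `H_p(t) = |t|^{p-2} t`. -/
def Hp (p t : ℝ) : ℝ := |t| ^ (p - 2) * t

/-- Positive part of a function. -/
def plusPart {n : ℕ} (f : Rn n → ℝ) : Rn n → ℝ := fun x => max (f x) 0

/-- Negative part of a function. -/
def minusPart {n : ℕ} (f : Rn n → ℝ) : Rn n → ℝ := fun x => max (-f x) 0

/-- The Gagliardo integrand `|u(x)-u(y)|^p |x-y|^{-n-ps}`. -/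
def gagliardoIntegrand (n : ℕ) (p s : ℝ) (u : Rn n → ℝ) (z : Rn n × Rn n) : ℝ :=
  |u z.1 - u z.2| ^ p * ‖z.1 - z.2‖ ^ (-(n : ℝ) - p * s)

/-- The Gagliardo seminorm `[u]_{W^{s,p}(U)}`. -/
def gagliardoSemi (n : ℕ) (p s : ℝ) (U : Set (Rn n)) (u : Rn n → ℝ) : ℝ :=
  (∫ z in U ×ˢ U, gagliardoIntegrand n p s u z) ^ (1 / p)

/-- The `L^p(U)` norm. -/
def lpNormOn (n : ℕ) (p : ℝ) (U : Set (Rn n)) (u : Rn n → ℝ) : ℝ :=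
  (∫ x in U, |u x| ^ p) ^ (1 / p)

/-- The `W^{s,p}(U)` norm. -/
def wspNorm (n : ℕ) (p s : ℝ) (U : Set (Rn n)) (u : Rn n → ℝ) : ℝ :=
  lpNormOn n p U u + gagliardoSemi n p s U u

/-- Membership in the fractional Sobolev space `W^{s,p}(U)`. -/
def MemWsp (n : ℕ) (p s : ℝ) (U : Set (Rn n)) (u : Rn n → ℝ) : Prop :=
  Measurable u ∧ IntegrableOn (fun x => |u x| ^ p) U ∧
    IntegrableOn (gagliardoIntegrand n p s u) (U ×ˢ U)

/-- `ℝ^{2n}_Ω = ℝ^{2n} ∖ (Ωᶜ × Ωᶜ)`. -/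
def R2n (n : ℕ) (Ω : Set (Rn n)) : Set (Rn n × Rn n) := {z | z.1 ∈ Ω ∨ z.2 ∈ Ω}

/-- Membership in `X^{s,p}(Ω)`. -/
def MemX (n : ℕ) (p s : ℝ) (Ω : Set (Rn n)) (u : Rn n → ℝ) : Prop :=
  Measurable u ∧ IntegrableOn (fun x => |u x| ^ p) Ω ∧
    IntegrableOn (gagliardoIntegrand n p s u) (R2n n Ω)

/-- Membership in `X^{s,p}_0(Ω)`. -/
def MemX0 (n : ℕ) (p s : ℝ) (Ω : Set (Rn n)) (u : Rn n → ℝ) : Prop :=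
  MemX n p s Ω u ∧ ∀ᵐ x ∂(volume : Measure (Rn n)), x ∉ Ω → u x = 0

/-- The norm `‖u‖_{X^{s,p}_0(Ω)}`. -/
def normX0 (n : ℕ) (p s : ℝ) (Ω : Set (Rn n)) (u : Rn n → ℝ) : ℝ :=
  (∫ z in R2n n Ω, gagliardoIntegrand n p s u z) ^ (1 / p)

/-- Open axis-parallel cube with center `c` and half side-length `h`. -/
def cube (n : ℕ) (c : Fin n → ℝ) (h : ℝ) : Set (Rn n) := {y | ∀ i, |y i - c i| < h}

/-- The `(A_1,A_1)` characteristic `[υ,ω]_{(A_1,A_1)}`. -/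
def A1const (n : ℕ) (υ ω : Rn n → ℝ) : ℝ≥0∞ :=
  ⨆ (c : Fin n → ℝ) (h : ℝ) (_ : 0 < h),
    ENNReal.ofReal (⨍ y in cube n c h, υ y) *
      essSup (fun y => (ENNReal.ofReal (ω y))⁻¹) (volume.restrict (cube n c h))

/-- `(υ,ω)` belongs to the `(A_1,A_1)`-Muckenhoupt class. -/
def A1pair (n : ℕ) (υ ω : Rn n → ℝ) : Prop := A1const n υ ω < ⊤

/-- `ω` belongs to the `A_1`-Muckenhoupt class. -/
def A1 (n : ℕ) (ω : Rn n → ℝ) : Prop := A1pair n ω ω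

/-- Membership in the potential class `𝒫^{s,p}_q(ℝⁿ)`. -/
structure IsPotential (n : ℕ) (p s q : ℝ) (V : Rn n → ℝ) : Prop where
  measurable : Measurable V
  minusPart_locInt : LocallyIntegrable (minusPart V) volume
  plusPart_locLq : LocallyIntegrable (fun x => plusPart V x ^ q) volume
  exists_b : ∃ b : Rn n → ℝ, Measurable b ∧ (∀ᵐ x ∂(volume : Measure (Rn n)), 0 < b x) ∧
    (∃ M : ℝ, ∀ x, |b x| ≤ M) ∧
    LocallyIntegrable (fun x => (plusPart V x / b x) ^ q) volume ∧
    ∀ i : ℕ, 0 < i →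
      A1pair n (minusPart V) (fun x => max (b x) (1 / (i : ℝ)) / b x * plusPart V x) ∧
      A1 n (fun x => max (b x) (1 / (i : ℝ)) / b x * plusPart V x)

/-- Membership in the weighted class `L^p_V(Ω)`. -/
def MemLpV (n : ℕ) (p : ℝ) (Ω : Set (Rn n)) (V u : Rn n → ℝ) : Prop :=
  IntegrableOn (fun x => |u x| ^ p * plusPart V x) Ω ∧
    IntegrableOn (fun x => |u x| ^ p * minusPart V x) Ω

/-- Membership in `Y^{s,p}(Ω)`. -/
def MemY (n : ℕ) (p s : ℝ) (Ω : Set (Rn n)) (V u : Rn n → ℝ) : Prop :=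
  MemX n p s Ω u ∧ MemLpV n p Ω V u

/-- Membership in `Y^{s,p}_0(Ω)`. -/
def MemY0 (n : ℕ) (p s : ℝ) (Ω : Set (Rn n)) (V u : Rn n → ℝ) : Prop :=
  MemX0 n p s Ω u ∧ MemLpV n p Ω V u

/-- Membership in `Y^{s,p}_g(Ω)^+`. -/
def MemYgPlus (n : ℕ) (p s : ℝ) (Ω : Set (Rn n)) (V g u : Rn n → ℝ) : Prop :=
  MemY n p s Ω V u ∧ MemY0 n p s Ω V (fun x => max (g x - u x) 0)

/-- Membership in `Y^{s,p}_g(Ω)^-`. -/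
def MemYgMinus (n : ℕ) (p s : ℝ) (Ω : Set (Rn n)) (V g u : Rn n → ℝ) : Prop :=
  MemY n p s Ω V u ∧ MemY0 n p s Ω V (fun x => max (u x - g x) 0)

/-- Membership in `Y^{s,p}_g(Ω)`. -/
def MemYg (n : ℕ) (p s : ℝ) (Ω : Set (Rn n)) (V g u : Rn n → ℝ) : Prop :=
  MemYgPlus n p s Ω V g u ∧ MemYgMinus n p s Ω V g u

/-- The pairing `⟨u,φ⟩_{H_p,K}`. -/
def pairing (n : ℕ) (p : ℝ) (K u φ : Rn n → ℝ) : ℝ :=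
  ∫ z : Rn n × Rn n, Hp p (u z.1 - u z.2) * (φ z.1 - φ z.2) * K (z.1 - z.2)

/-- `u` is a weak subsolution of `L^p_K u + V|u|^{p-2}u = 0` in `Ω` with exterior data `g`. -/
def WeakSubsolution (n : ℕ) (p s : ℝ) (Ω : Set (Rn n)) (K V g u : Rn n → ℝ) : Prop :=
  MemYgMinus n p s Ω V g u ∧
    ∀ φ : Rn n → ℝ, MemY0 n p s Ω V φ → (∀ x, 0 ≤ φ x) →
      pairing n p K u φ + ∫ x : Rn n, V x * (|u x| ^ (p - 2) * u x) * φ x ≤ 0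

/-- `u` is a weak supersolution of `L^p_K u + V|u|^{p-2}u = 0` in `Ω` with exterior data `g`. -/
def WeakSupersolution (n : ℕ) (p s : ℝ) (Ω : Set (Rn n)) (K V g u : Rn n → ℝ) : Prop :=
  MemYgPlus n p s Ω V g u ∧
    ∀ φ : Rn n → ℝ, MemY0 n p s Ω V φ → (∀ x, 0 ≤ φ x) →
      0 ≤ pairing n p K u φ + ∫ x : Rn n, V x * (|u x| ^ (p - 2) * u x) * φ x

/-- `u` is a weak solution of `L^p_K u + V|u|^{p-2}u = 0` in `Ω` with exterior data `g`. -/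
def WeakSolution (n : ℕ) (p s : ℝ) (Ω : Set (Rn n)) (K V g u : Rn n → ℝ) : Prop :=
  MemYg n p s Ω V g u ∧
    ∀ φ : Rn n → ℝ, MemY0 n p s Ω V φ →
      pairing n p K u φ + ∫ x : Rn n, V x * (|u x| ^ (p - 2) * u x) * φ x = 0

/-- The surface measure `|S^{n-1}|` of the unit sphere of `ℝⁿ`. -/
def sphereArea (n : ℕ) : ℝ := n * (volume (Metric.ball (0 : Rn n) 1)).toReal

/-- The nonlocal tail `𝒯_r(u;x₀)`. -/
def tail (n : ℕ) (p s : ℝ) (u : Rn n → ℝ) (x₀ : Rn n) (r : ℝ) : ℝ :=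
  (p * s / sphereArea n * r ^ (p * s) *
      ∫ y in (Metric.ball x₀ r)ᶜ, |u y| ^ (p - 1) * ‖y - x₀‖ ^ (-(n : ℝ) - p * s)) ^ (1 / (p - 1))

def supOn {n : ℕ} (u : Rn n → ℝ) (B : Set (Rn n)) : ℝ := sSup (u '' B)
def infOn {n : ℕ} (u : Rn n → ℝ) (B : Set (Rn n)) : ℝ := sInf (u '' B)
def oscOn {n : ℕ} (u : Rn n → ℝ) (B : Set (Rn n)) : ℝ := supOn u B - infOn u B

/-- The `L^q(Ω)` norm, used for `‖V₊‖_{L^q(Ω)}`. -/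
def lqNormOn (n : ℕ) (q : ℝ) (Ω : Set (Rn n)) (f : Rn n → ℝ) : ℝ :=
  (∫ x in Ω, |f x| ^ q) ^ (1 / q)

/-- The Hölder seminorm `[u]_{C^ε(B)}`. -/
def holderSemi {n : ℕ} (ε : ℝ) (B : Set (Rn n)) (u : Rn n → ℝ) : ℝ :=
  sSup ((fun z : Rn n × Rn n => |u z.1 - u z.2| / ‖z.1 - z.2‖ ^ ε) ''
    ((B ×ˢ B) ∩ {z | z.1 ≠ z.2}))

/-- The sup norm `‖u‖_{C(B)}`. -/
def cNorm {n : ℕ} (B : Set (Rn n)) (u : Rn n → ℝ) : ℝ := sSup ((fun x => |u x|) '' B)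

/-- The Hölder norm `‖u‖_{C^ε(B)}`. -/
def holderNorm {n : ℕ} (ε : ℝ) (B : Set (Rn n)) (u : Rn n → ℝ) : ℝ :=
  cNorm B u + holderSemi ε B u

/-- `u` is locally `ε`-Hölder continuous in `Ω`. -/
def LocallyHolder {n : ℕ} (ε : ℝ) (Ω : Set (Rn n)) (u : Rn n → ℝ) : Prop :=
  ∀ (x₀ : Rn n) (r : ℝ), closure (Metric.ball x₀ r) ⊆ Ω →
    ∃ L : ℝ, ∀ x ∈ Metric.ball x₀ r, ∀ y ∈ Metric.ball x₀ r, |u x - u y| ≤ L * ‖x - y‖ ^ ε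

end NLS

open NLS

/-!
Test the supersolution with `φ = ψ^p (u₊ + b)^{1-p}`, where `ψ` is a cutoff with `ψ = 1` on `B_r`
and `ψ = 0` off `B_{3r/2}`. On `B_r × B_r`, a discrete logarithmic inequality bounds the nonlocal
integrand of `φ` above by `-(p - 1) |ln ((u(x) + b) / (u(y) + b))|^p K(x - y)`. Everywhere else a
discrete Picone inequality bounds it by `|ψ(x) - ψ(y)|^p K(x - y)`, whose integral is of order
`r^{n-ps}`, plus a contribution of the negative part of `u`. Since `u ≥ 0` in `B_R`, the latter
involves only points of `B_{3r/2}` and `B_Rᶜ`, where `|x - y|` is comparable with the distance to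
the center, so it integrates to the tail. Finally `u^{p-1} φ ≤ 1`, so the potential term is at most
`∫ V₊` over `B_{3r/2}`, which Hölder's inequality controls because `q ≥ n/(ps)`.
-/

namespace NLS

open scoped NNReal

/-! ### Scalar inequalities -/

section Scalar

variable {p a b d x y α β : ℝ}

theorem Hp_of_nonneg (hp : p ≠ 1) (ha : 0 ≤ a) : Hp p a = a ^ (p - 1) := by
  have hexp : p - 1 = p - 2 + 1 := by ring
  rw [Hp, abs_of_nonneg ha, hexp, Real.rpow_add_one' ha (hexp ▸ sub_ne_zero.mpr hp)]

theorem Hp_neg (p a : ℝ) : Hp p (-a) = -Hp p a := by simp [Hp]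

theorem abs_Hp (hp : p ≠ 1) (a : ℝ) : |Hp p a| = |a| ^ (p - 1) := by
  rw [← Hp_of_nonneg hp (abs_nonneg a), Hp, Hp, abs_mul, abs_abs, abs_of_nonneg (by positivity)]

theorem mul_div_rpow (hx : 0 ≤ x) (ha : 0 < a) : a * (x / a) ^ p = x ^ p * a ^ (1 - p) := by
  rw [Real.div_rpow hx ha.le, Real.rpow_sub ha, Real.rpow_one]
  ring

theorem rpow_mul_rpow_one_sub (ha : 0 < a) (p : ℝ) : a ^ (p - 1) * a ^ (1 - p) = 1 := by
  rw [← Real.rpow_add ha, sub_add_sub_cancel, sub_self, Real.rpow_zero]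

theorem radon_inequality (hp : 1 ≤ p) (hx : 0 ≤ x) (hy : 0 ≤ y) (ha : 0 < a) (hd : 0 < d) :
    (x + y) ^ p * (a + d) ^ (1 - p) ≤ x ^ p * a ^ (1 - p) + y ^ p * d ^ (1 - p) := by
  have had : 0 < a + d := add_pos ha hd
  have hconv := (convexOn_rpow hp).2 (div_nonneg hx ha.le) (div_nonneg hy hd.le)
    (div_pos ha had).le (div_pos hd had).le (by field_simp)
  have hmean : a / (a + d) * (x / a) + d / (a + d) * (y / d) = (x + y) / (a + d) := by field_simp
  simp only [smul_eq_mul, hmean] at hconv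
  calc (x + y) ^ p * (a + d) ^ (1 - p) = (a + d) * ((x + y) / (a + d)) ^ p :=
        (mul_div_rpow (add_nonneg hx hy) had).symm
    _ ≤ (a + d) * (a / (a + d) * (x / a) ^ p + d / (a + d) * (y / d) ^ p) := by gcongr
    _ = a * (x / a) ^ p + d * (y / d) ^ p := by field_simp
    _ = x ^ p * a ^ (1 - p) + y ^ p * d ^ (1 - p) := by
        rw [mul_div_rpow hx ha, mul_div_rpow hy hd]

theorem picone_inequality_of_le (hp : 1 < p) (hd : 0 < d) (hda : d ≤ a) (hα : 0 ≤ α)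
    (hβ : 0 ≤ β) :
    (a - d) ^ (p - 1) * (α ^ p * a ^ (1 - p) - β ^ p * d ^ (1 - p)) ≤ |α - β| ^ p := by
  rcases hda.eq_or_lt with rfl | hlt
  · rw [sub_self, Real.zero_rpow (sub_ne_zero.mpr hp.ne'), zero_mul]
    positivity
  have had : 0 < a - d := sub_pos.mpr hlt
  have hradon : α ^ p * a ^ (1 - p) ≤ |α - β| ^ p * (a - d) ^ (1 - p) + β ^ p * d ^ (1 - p) :=
    calc α ^ p * a ^ (1 - p) ≤ (|α - β| + β) ^ p * (a - d + d) ^ (1 - p) := by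
          rw [sub_add_cancel]
          have := hd.trans hlt
          gcongr
          linarith [le_abs_self (α - β)]
      _ ≤ _ := radon_inequality hp.le (abs_nonneg _) hβ had hd
  calc (a - d) ^ (p - 1) * (α ^ p * a ^ (1 - p) - β ^ p * d ^ (1 - p))
      ≤ (a - d) ^ (p - 1) * (|α - β| ^ p * (a - d) ^ (1 - p)) := by
        gcongr
        linarith
    _ = |α - β| ^ p := by rw [mul_left_comm, rpow_mul_rpow_one_sub had, mul_one]

theorem picone_inequality (hp : 1 < p) (ha : 0 < a) (hd : 0 < d) (hα : 0 ≤ α) (hβ : 0 ≤ β) :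
    Hp p (a - d) * (α ^ p * a ^ (1 - p) - β ^ p * d ^ (1 - p)) ≤ |α - β| ^ p := by
  rcases le_total d a with hda | had
  · rw [Hp_of_nonneg hp.ne' (sub_nonneg.mpr hda)]
    exact picone_inequality_of_le hp hd hda hα hβ
  · rw [← neg_sub d a, Hp_neg, Hp_of_nonneg hp.ne' (sub_nonneg.mpr had), neg_mul_comm, neg_sub,
      abs_sub_comm]
    exact picone_inequality_of_le hp ha had hβ hα

theorem exp_midpoint_mul_sub_le (hyx : y ≤ x) :
    Real.exp ((x + y) / 2) * (x - y) ≤ Real.exp x - Real.exp y := by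
  have hsinh : (x - y) / 2 ≤ Real.sinh ((x - y) / 2) := Real.self_le_sinh_iff.mpr (by linarith)
  calc Real.exp ((x + y) / 2) * (x - y)
      ≤ Real.exp ((x + y) / 2) * (2 * Real.sinh ((x - y) / 2)) := by
        gcongr
        linarith
    _ = Real.exp ((x + y) / 2 + (x - y) / 2) - Real.exp ((x + y) / 2 + -((x - y) / 2)) := by
        rw [Real.sinh_eq, Real.exp_add, Real.exp_add]
        ring
    _ = Real.exp x - Real.exp y := by ring_nf

theorem log_div_rpow_le (hp : 1 < p) (hd : 0 < d) (hda : d ≤ a) :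
    (p - 1) * |Real.log (a / d)| ^ p ≤ (a - d) ^ (p - 1) * (d ^ (1 - p) - a ^ (1 - p)) := by
  obtain ⟨x, rfl⟩ : ∃ x, Real.exp x = a := ⟨_, Real.exp_log (hd.trans_le hda)⟩
  obtain ⟨y, rfl⟩ : ∃ y, Real.exp y = d := ⟨_, Real.exp_log hd⟩
  have hyx : 0 ≤ x - y := sub_nonneg.mpr (Real.exp_le_exp.mp hda)
  have hp1 : 0 < p - 1 := sub_pos.mpr hp
  have hfst : Real.exp (x * (p - 1) / 2 + y * (p - 1) / 2) * (x - y) ^ (p - 1) ≤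
      (Real.exp x - Real.exp y) ^ (p - 1) :=
    calc _ = (Real.exp ((x + y) / 2) * (x - y)) ^ (p - 1) := by
          rw [Real.mul_rpow (Real.exp_pos _).le hyx, ← Real.exp_mul]
          ring_nf
      _ ≤ _ := by
          gcongr
          exact exp_midpoint_mul_sub_le (sub_nonneg.mp hyx)
  have hsnd : Real.exp (-(x * (p - 1) / 2 + y * (p - 1) / 2)) * ((p - 1) * (x - y)) ≤
      Real.exp y ^ (1 - p) - Real.exp x ^ (1 - p) := by
    have := exp_midpoint_mul_sub_le (x := y * (1 - p)) (y := x * (1 - p)) (by nlinarith)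
    rw [← Real.exp_mul, ← Real.exp_mul]
    convert this using 2 <;> ring_nf
  calc (p - 1) * |Real.log (Real.exp x / Real.exp y)| ^ p
      = (p - 1) * ((x - y) ^ (p - 1) * (x - y)) := by
        rw [← Real.exp_sub, Real.log_exp, abs_of_nonneg hyx,
          ← Real.rpow_add_one' hyx (by linarith), sub_add_cancel]
    _ = Real.exp (x * (p - 1) / 2 + y * (p - 1) / 2) * (x - y) ^ (p - 1) *
          (Real.exp (-(x * (p - 1) / 2 + y * (p - 1) / 2)) * ((p - 1) * (x - y))) := by
        rw [Real.exp_neg]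
        field_simp
    _ ≤ _ := by gcongr

theorem Hp_sub_mul_rpow_sub_le_log (hp : 1 < p) (ha : 0 < a) (hd : 0 < d) :
    Hp p (a - d) * (a ^ (1 - p) - d ^ (1 - p)) ≤ -((p - 1) * |Real.log (a / d)| ^ p) := by
  rw [le_neg, ← mul_neg, neg_sub]
  rcases le_total d a with hda | had
  · rw [Hp_of_nonneg hp.ne' (sub_nonneg.mpr hda)]
    exact log_div_rpow_le hp hd hda
  · rw [← neg_sub d a, Hp_neg, Hp_of_nonneg hp.ne' (sub_nonneg.mpr had), neg_mul_comm, neg_sub,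
      ← inv_div, Real.log_inv, abs_neg]
    exact log_div_rpow_le hp ha had

theorem add_rpow_le_two_rpow_mul (hp : 0 ≤ p) (ha : 0 ≤ a) (hb : 0 ≤ b) :
    (a + b) ^ p ≤ 2 ^ p * (a ^ p + b ^ p) := by
  wlog hab : a ≤ b generalizing a b
  · rw [add_comm a, add_comm (a ^ p)]
    exact this hb ha (le_of_not_ge hab)
  calc (a + b) ^ p ≤ (2 * b) ^ p := by gcongr; linarith
    _ = 2 ^ p * b ^ p := Real.mul_rpow zero_le_two hb
    _ ≤ 2 ^ p * (a ^ p + b ^ p) := by gcongr; exact le_add_of_nonneg_left (by positivity)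

theorem rpow_mul_add_rpow_le_one (hp : 1 ≤ p) (ha : 0 ≤ a) (hb : 0 < b) :
    a ^ (p - 1) * (a + b) ^ (1 - p) ≤ 1 :=
  calc a ^ (p - 1) * (a + b) ^ (1 - p) ≤ (a + b) ^ (p - 1) * (a + b) ^ (1 - p) := by
        gcongr
        exact le_add_of_nonneg_right hb.le
    _ = 1 := rpow_mul_rpow_one_sub (by positivity) p

theorem add_rpow_mul_rpow_one_sub_le (hp : 1 ≤ p) (ha : 0 ≤ a) (hd : 0 ≤ d) (hb : 0 < b) :
    (a + d) ^ (p - 1) * (a + b) ^ (1 - p) ≤ 2 ^ (p - 1) * (1 + b ^ (1 - p) * d ^ (p - 1)) := by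
  have hmono : (a + b) ^ (1 - p) ≤ b ^ (1 - p) :=
    Real.rpow_le_rpow_of_nonpos hb (le_add_of_nonneg_left ha) (by linarith)
  calc (a + d) ^ (p - 1) * (a + b) ^ (1 - p)
      ≤ 2 ^ (p - 1) * (a ^ (p - 1) + d ^ (p - 1)) * (a + b) ^ (1 - p) := by
        gcongr
        exact add_rpow_le_two_rpow_mul (sub_nonneg.mpr hp) ha hd
    _ = 2 ^ (p - 1) * (a ^ (p - 1) * (a + b) ^ (1 - p) + (a + b) ^ (1 - p) * d ^ (p - 1)) := by
        ring
    _ ≤ _ := by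
        gcongr
        exact rpow_mul_add_rpow_le_one hp ha hb

theorem abs_rpow_sub_rpow_le (hp : 1 ≤ p) (hα : α ∈ Icc 0 1) (hβ : β ∈ Icc 0 1) :
    |α ^ p - β ^ p| ≤ p * |α - β| := by
  refine (convex_Icc (0 : ℝ) 1).norm_image_sub_le_of_norm_hasDerivWithin_le
    (f' := fun t ↦ p * t ^ (p - 1))
    (fun t _ ↦ (Real.hasDerivAt_rpow_const (Or.inr hp)).hasDerivWithinAt) (fun t ht ↦ ?_) hβ hα
  rw [Real.norm_of_nonneg (mul_nonneg (by linarith) (Real.rpow_nonneg ht.1 _))]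
  exact mul_le_of_le_one_right (by linarith) (Real.rpow_le_one ht.1 ht.2 (by linarith))

theorem abs_rpow_one_sub_sub_le (hp : 1 ≤ p) (hb : 0 < b) (ha : b ≤ a) (hd : b ≤ d) :
    |a ^ (1 - p) - d ^ (1 - p)| ≤ (p - 1) * b ^ (-p) * |a - d| := by
  refine (convex_Ici b).norm_image_sub_le_of_norm_hasDerivWithin_le
    (f' := fun t ↦ (1 - p) * t ^ (1 - p - 1)) (fun t (ht : b ≤ t) ↦
      (Real.hasDerivAt_rpow_const (Or.inl (hb.trans_le ht).ne')).hasDerivWithinAt)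
    (fun t (ht : b ≤ t) ↦ ?_) hd ha
  have ht0 : 0 < t := hb.trans_le ht
  rw [norm_mul, Real.norm_of_nonpos (by linarith), neg_sub, sub_sub_cancel_left,
    Real.norm_of_nonneg (by positivity)]
  exact mul_le_mul_of_nonneg_left (Real.rpow_le_rpow_of_nonpos hb ht (by linarith)) (by linarith)

theorem rpow_sub_one_mul_le (hp : 1 < p) (ha : 0 ≤ a) (hb : 0 ≤ b) :
    a ^ (p - 1) * b ≤ a ^ p + b ^ p := by
  have hmax : 0 ≤ max a b := ha.trans (le_max_left a b)
  calc a ^ (p - 1) * b ≤ max a b ^ (p - 1) * max a b := by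
        gcongr
        exacts [le_max_left a b, le_max_right a b]
    _ = max (a ^ p) (b ^ p) := by
        rw [← Real.rpow_add_one' hmax (by linarith), sub_add_cancel,
          (Real.monotoneOn_rpow_Ici_of_exponent_nonneg (by linarith)).map_max ha hb]
    _ ≤ a ^ p + b ^ p := max_le_add_of_nonneg (by positivity) (by positivity)

theorem rpow_neg_le_of_le_mul {c : ℝ} (hp : 0 ≤ p) (ha : 0 < a) (hc : 0 ≤ c) (h : a ≤ c * b) :
    b ^ (-p) ≤ c ^ p * a ^ (-p) := by
  have hb : 0 < b := pos_of_mul_pos_right (ha.trans_le h) hc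
  rw [Real.rpow_neg hb.le, Real.rpow_neg ha.le, ← div_eq_mul_inv, le_div_iff₀ (by positivity),
    inv_mul_le_iff₀ (by positivity), mul_comm, ← Real.mul_rpow hc hb.le]
  gcongr

theorem Hp_sub_mul_le_of_nonpos_right {U W : ℝ} (hp : 1 < p) (hb : 0 < b) (hα : 0 ≤ α) (hU : 0 ≤ U)
    (hW : W ≤ 0) :
    Hp p (U - W) * (α ^ p * (max U 0 + b) ^ (1 - p)) ≤
      2 ^ (p - 1) * α ^ p + 2 ^ (p - 1) * b ^ (1 - p) * (max (-W) 0 ^ (p - 1) * α ^ p) := by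
  have hfar := add_rpow_mul_rpow_one_sub_le hp.le hU (neg_nonneg.mpr hW) hb
  rw [Hp_of_nonneg hp.ne' (by linarith), max_eq_left hU, max_eq_left (neg_nonneg.mpr hW)]
  calc (U - W) ^ (p - 1) * (α ^ p * (U + b) ^ (1 - p))
      = (U + -W) ^ (p - 1) * (U + b) ^ (1 - p) * α ^ p := by rw [← sub_eq_add_neg]; ring
    _ ≤ 2 ^ (p - 1) * (1 + b ^ (1 - p) * (-W) ^ (p - 1)) * α ^ p := by gcongr
    _ = _ := by ring

theorem Hp_sub_mul_test_sub_le {U W : ℝ} (hp : 1 < p) (hb : 0 < b) (hα : 0 ≤ α) (hβ : 0 ≤ β)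
    (hU : U < 0 → α = 0) (hW : W < 0 → β = 0) :
    Hp p (U - W) * (α ^ p * (max U 0 + b) ^ (1 - p) - β ^ p * (max W 0 + b) ^ (1 - p)) ≤
      2 ^ (p - 1) * |α - β| ^ p + 2 ^ (p - 1) * b ^ (1 - p) *
        (max (-W) 0 ^ (p - 1) * α ^ p + max (-U) 0 ^ (p - 1) * β ^ p) := by
  have hzero : (0 : ℝ) ^ p = 0 := Real.zero_rpow (by linarith)
  rcases lt_or_ge U 0 with hU0 | hU0 <;> rcases lt_or_ge W 0 with hW0 | hW0
  · simp [hU hU0, hW hW0, hzero]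
  · have hfar := Hp_sub_mul_le_of_nonpos_right hp hb hβ hW0 hU0.le
    rw [← neg_sub W U, Hp_neg, hU hU0, zero_sub, abs_neg, abs_of_nonneg hβ, hzero]
    linarith
  · have hfar := Hp_sub_mul_le_of_nonpos_right hp hb hα hU0 hW0.le
    rw [hW hW0, sub_zero, abs_of_nonneg hα, hzero]
    linarith
  · have hpicone := picone_inequality hp (add_pos_of_nonneg_of_pos hU0 hb)
      (add_pos_of_nonneg_of_pos hW0 hb) hα hβ
    have htwo : (1 : ℝ) ≤ 2 ^ (p - 1) := Real.one_le_rpow one_le_two (by linarith)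
    rw [add_sub_add_right_eq_sub] at hpicone
    rw [max_eq_left hU0, max_eq_left hW0]
    exact (hpicone.trans (le_mul_of_one_le_left (by positivity) htwo)).trans
      (le_add_of_nonneg_right (by positivity))

end Scalar

/-! ### Majorants on the product space -/

section Kernel

theorem integrableOn_Ioi_min_one_rpow_mul_rpow {p a : ℝ} (hpa : -1 < p + a) (ha : a < -1) :
    IntegrableOn (fun t : ℝ ↦ min 1 t ^ p * t ^ a) (Ioi 0) := by
  rw [← Ioc_union_Ioi_eq_Ioi zero_le_one]
  refine IntegrableOn.union ?_ ?_
  · rw [integrableOn_Ioc_iff_integrableOn_Ioo]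
    refine ((intervalIntegral.integrableOn_Ioo_rpow_iff zero_lt_one).mpr hpa).congr_fun
      (fun t ht ↦ ?_) measurableSet_Ioo
    simp only [min_eq_right ht.2.le, Real.rpow_add ht.1]
  · refine (integrableOn_Ioi_rpow_of_lt ha zero_lt_one).congr_fun (fun t ht ↦ ?_) measurableSet_Ioi
    rw [min_eq_left (mem_Ioi.mp ht).le, Real.one_rpow, one_mul]

variable {E : Type*} [NormedAddCommGroup E]

/-- The radial kernel `min (1, L|z|)^p |z|^e` on a normed space. With `e = -n - ps` it majorizes the
Gagliardo integrand of an `L`-Lipschitz function with values in `[0, 1]`. -/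
def truncKernel (p e L : ℝ) (z : E) : ℝ := min 1 (L * ‖z‖) ^ p * ‖z‖ ^ e

theorem truncKernel_nonneg (p e : ℝ) {L : ℝ} (hL : 0 ≤ L) (z : E) : 0 ≤ truncKernel p e L z :=
  have : 0 ≤ min 1 (L * ‖z‖) := by positivity
  mul_nonneg (by positivity) (by positivity)

variable [NormedSpace ℝ E]

theorem truncKernel_eq_smul (p e : ℝ) {L : ℝ} (hL : 0 < L) (z : E) :
    truncKernel p e L z = L ^ (-e) * truncKernel p e 1 (L • z) := by
  rw [truncKernel, truncKernel, norm_smul, Real.norm_of_nonneg hL.le, one_mul,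
    Real.mul_rpow hL.le (norm_nonneg z), mul_left_comm, Real.rpow_neg hL.le,
    inv_mul_cancel_left₀ (by positivity)]

variable [FiniteDimensional ℝ E] [MeasurableSpace E] [BorelSpace E] (μ : Measure E)
  [μ.IsAddHaarMeasure]

theorem integral_truncKernel (p e : ℝ) {L : ℝ} (hL : 0 < L) :
    ∫ z, truncKernel p e L z ∂μ =
      L ^ (-e - Module.finrank ℝ E) * ∫ z, truncKernel p e 1 (z : E) ∂μ := by
  simp only [truncKernel_eq_smul p e hL, integral_const_mul,
    Measure.integral_comp_smul_of_nonneg μ _ L (hR := hL.le), smul_eq_mul]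
  rw [Real.rpow_sub hL, Real.rpow_natCast, div_eq_mul_inv, mul_assoc]

theorem integrable_truncKernel [Nontrivial E] {p e L : ℝ}
    (hpe : -Module.finrank ℝ E < p + e) (he : e < -Module.finrank ℝ E) (hL : 0 < L) :
    Integrable (truncKernel p e L : E → ℝ) μ := by
  have hunit : Integrable (truncKernel p e 1 : E → ℝ) μ := by
    refine (integrable_fun_norm_addHaar μ (f := fun t ↦ min 1 (1 * t) ^ p * t ^ e)).mpr ?_
    have hdim : ((Module.finrank ℝ E - 1 : ℕ) : ℝ) = Module.finrank ℝ E - 1 := by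
      rw [Nat.cast_sub Module.finrank_pos, Nat.cast_one]
    refine (integrableOn_Ioi_min_one_rpow_mul_rpow (p := p) (a := Module.finrank ℝ E - 1 + e)
      (by linarith) (by linarith)).congr_fun (fun t ht ↦ ?_) measurableSet_Ioi
    simp only [smul_eq_mul, one_mul]
    rw [Real.rpow_add ht, ← hdim, Real.rpow_natCast, mul_left_comm]
  rw [funext (truncKernel_eq_smul p e hL)]
  exact (hunit.comp_smul hL.ne').const_mul _

end Kernel

section Symmetrization

/-- The symmetrization `F (x, y) + F (y, x)`, whose integral is twice that of `F`. -/
def symmSum {X : Type*} (F : X × X → ℝ) (z : X × X) : ℝ := F z + F z.swap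

variable {X : Type*} [MeasurableSpace X] {μ : Measure X}

theorem integrable_indicator_one {B : Set X} (hB : MeasurableSet B) (hμB : μ B ≠ ∞) :
    Integrable (B.indicator 1 : X → ℝ) μ :=
  (integrable_indicator_iff hB).mpr (integrableOn_const hμB)

theorem integrable_indicator_one_mul_prod {B : Set X} (hB : MeasurableSet B) (hμB : μ B ≠ ∞)
    {G : X → ℝ} (hG : Integrable G μ) :
    Integrable (fun z : X × X ↦ B.indicator 1 z.1 * G z.2) (μ.prod μ) :=
  (integrable_indicator_one hB hμB).mul_prod hG

variable [SFinite μ] {F : X × X → ℝ}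

theorem integrable_symmSum (hF : Integrable F (μ.prod μ)) : Integrable (symmSum F) (μ.prod μ) :=
  hF.add hF.swap

theorem integral_symmSum (hF : Integrable F (μ.prod μ)) :
    ∫ z, symmSum F z ∂μ.prod μ = 2 * ∫ z, F z ∂μ.prod μ := by
  rw [two_mul]
  exact (integral_add hF hF.swap).trans (congrArg _ (integral_prod_swap F))

theorem integral_indicator_one_mul_prod {B : Set X} (hB : MeasurableSet B) (G : X → ℝ) :
    ∫ z : X × X, B.indicator 1 z.1 * G z.2 ∂μ.prod μ = μ.real B * ∫ y, G y ∂μ := by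
  rw [integral_prod_mul, integral_indicator_one hB]

variable [AddGroup X] [MeasurableAdd₂ X] [MeasurableNeg X] [μ.IsAddRightInvariant]
  {B : Set X} {k : X → ℝ}

theorem integrable_indicator_one_mul_sub (hB : MeasurableSet B) (hμB : μ B ≠ ∞)
    (hk : Integrable k μ) :
    Integrable (fun z : X × X ↦ B.indicator 1 z.2 * k (z.1 - z.2)) (μ.prod μ) :=
  (integrable_indicator_one hB hμB).convolution_integrand (ContinuousLinearMap.mul ℝ ℝ) hk

theorem integral_indicator_one_mul_sub (hB : MeasurableSet B) (hμB : μ B ≠ ∞)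
    (hk : Integrable k μ) :
    ∫ z : X × X, B.indicator 1 z.2 * k (z.1 - z.2) ∂μ.prod μ = μ.real B * ∫ y, k y ∂μ := by
  rw [integral_prod_symm _ (integrable_indicator_one_mul_sub hB hμB hk)]
  simp only [integral_const_mul, integral_sub_right_eq_self, integral_mul_const,
    integral_indicator_one hB]

end Symmetrization

section Cutoff

variable {E : Type*} [NormedAddCommGroup E]

/-- `ψ` is an `L`-Lipschitz cutoff function with values in `[0, 1]`, equal to `1` on `A` and
vanishing outside `B`. -/
structure IsCutoff (ψ : E → ℝ) (L : ℝ≥0) (A B : Set E) : Prop where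
  mem_Icc : ∀ x, ψ x ∈ Icc 0 1
  lipschitz : LipschitzWith L ψ
  eq_one : ∀ x ∈ A, ψ x = 1
  eq_zero : ∀ x ∉ B, ψ x = 0

theorem exists_isCutoff_ball [NormedSpace ℝ E] (x₀ : E) {r : ℝ} (hr : 0 < r) :
    ∃ ψ : E → ℝ, IsCutoff ψ (r / 2).toNNReal⁻¹ (ball x₀ r) (ball x₀ (r * (3 / 2))) := by
  have hr2 : 0 < r / 2 := half_pos hr
  refine ⟨fun x ↦ thickenedIndicator hr2 (ball x₀ r) x, fun x ↦ ⟨NNReal.coe_nonneg _, ?_⟩,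
    lipschitzWith_thickenedIndicator hr2 _, fun x hx ↦ ?_, fun x hx ↦ ?_⟩
  · exact_mod_cast thickenedIndicator_le_one hr2 _ x
  · exact_mod_cast thickenedIndicator_one hr2 _ hx
  · refine NNReal.coe_eq_zero.mpr (thickenedIndicator_zero hr2 _ fun hmem ↦ hx ?_)
    rw [thickening_ball hr2 hr] at hmem
    exact ball_subset_ball (by linarith) hmem

/-- The symmetric majorant `1_B(y) k(x - y) + 1_B(x) k(y - x)` of the Gagliardo integrand of a
cutoff function supported in `B`, with `k` the truncated kernel. -/
def nearMajorant (p e : ℝ) (L : ℝ≥0) (B : Set E) : E × E → ℝ :=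
  symmSum fun z ↦ B.indicator 1 z.2 * truncKernel p e L (z.1 - z.2)

theorem nearMajorant_nonneg (p e : ℝ) (L : ℝ≥0) (B : Set E) (z : E × E) :
    0 ≤ nearMajorant p e L B z :=
  have hB : ∀ x, 0 ≤ B.indicator (1 : E → ℝ) x := indicator_nonneg fun _ _ ↦ zero_le_one
  have hk : ∀ x : E, 0 ≤ truncKernel p e L x := truncKernel_nonneg p e L.coe_nonneg
  add_nonneg (mul_nonneg (hB _) (hk _)) (mul_nonneg (hB _) (hk _))

theorem IsCutoff.abs_sub_rpow_mul_le_nearMajorant {ψ : E → ℝ} {L : ℝ≥0} {A B : Set E} {p : ℝ}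
    (hψ : IsCutoff ψ L A B) (hp : 0 < p) (e : ℝ) (z : E × E) :
    |ψ z.1 - ψ z.2| ^ p * ‖z.1 - z.2‖ ^ e ≤ nearMajorant p e L B z := by
  have hkernel : |ψ z.1 - ψ z.2| ^ p * ‖z.1 - z.2‖ ^ e ≤ truncKernel p e L (z.1 - z.2) := by
    rw [truncKernel]
    gcongr
    refine le_min (abs_sub_le_of_le_of_le (hψ.mem_Icc _).1 (hψ.mem_Icc _).2 (hψ.mem_Icc _).1
      (hψ.mem_Icc _).2 |>.trans (sub_zero _).le) ?_
    simpa only [Real.norm_eq_abs, dist_eq_norm] using hψ.lipschitz.dist_le_mul z.1 z.2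
  have hsymm : truncKernel p e L (z.2 - z.1) = truncKernel p e L (z.1 - z.2) := by
    rw [truncKernel, truncKernel, norm_sub_rev]
  have hnonneg := truncKernel_nonneg p e L.coe_nonneg (z.1 - z.2)
  simp only [nearMajorant, symmSum, Prod.fst_swap, Prod.snd_swap, hsymm]
  by_cases hz₁ : z.1 ∈ B <;> by_cases hz₂ : z.2 ∈ B <;>
    simp only [hz₁, hz₂, indicator_of_mem, indicator_of_notMem, not_false_eq_true, Pi.one_apply,
      one_mul, zero_mul, zero_add, add_zero]
  · linarith
  · exact hkernel
  · exact hkernel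
  · rw [hψ.eq_zero _ hz₁, hψ.eq_zero _ hz₂, sub_self, abs_zero, Real.zero_rpow hp.ne', zero_mul]

variable [NormedSpace ℝ E] [FiniteDimensional ℝ E] [MeasurableSpace E] [BorelSpace E]
  {μ : Measure E} [μ.IsAddHaarMeasure]

theorem integrableOn_compl_ball_norm_sub_rpow [Nontrivial E] {e R : ℝ}
    (he : e < -Module.finrank ℝ E) (hR : 0 < R) (x₀ : E) :
    IntegrableOn (fun y ↦ ‖y - x₀‖ ^ e) (ball x₀ R)ᶜ μ := by
  have hint : Integrable (truncKernel (-e) e R⁻¹ : E → ℝ) μ :=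
    integrable_truncKernel μ (by simp [Module.finrank_pos]) he (inv_pos.mpr hR)
  refine (hint.comp_sub_right x₀).integrableOn.congr_fun (fun y hy ↦ ?_) measurableSet_ball.compl
  have hy : 1 ≤ R⁻¹ * ‖y - x₀‖ := by
    rw [mem_compl_iff, mem_ball_iff_norm, not_lt] at hy
    rwa [le_inv_mul_iff₀ hR, mul_one]
  simp only [truncKernel, min_eq_left hy, Real.one_rpow, one_mul]

variable {p e : ℝ} {L : ℝ≥0} {B : Set E}

theorem integrable_nearMajorant [Nontrivial E] (hpe : -Module.finrank ℝ E < p + e)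
    (he : e < -Module.finrank ℝ E) (hL : 0 < L) (hB : MeasurableSet B) (hμB : μ B ≠ ∞) :
    Integrable (nearMajorant p e L B) (μ.prod μ) :=
  integrable_symmSum (integrable_indicator_one_mul_sub hB hμB
    (integrable_truncKernel μ hpe he hL))

theorem integral_nearMajorant [Nontrivial E] (hpe : -Module.finrank ℝ E < p + e)
    (he : e < -Module.finrank ℝ E) (hL : 0 < L) (hB : MeasurableSet B) (hμB : μ B ≠ ∞) :
    ∫ z, nearMajorant p e L B z ∂μ.prod μ =
      2 * (μ.real B * (L ^ (-e - Module.finrank ℝ E) * ∫ z, truncKernel p e 1 (z : E) ∂μ)) := by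
  have hint := integrable_truncKernel μ hpe he (NNReal.coe_pos.mpr hL)
  rw [nearMajorant, integral_symmSum (integrable_indicator_one_mul_sub hB hμB hint),
    integral_indicator_one_mul_sub hB hμB hint, integral_truncKernel μ p e (NNReal.coe_pos.mpr hL)]

end Cutoff

/-! ### The nonlocal tail -/

section Tail

variable {n : ℕ} {p s R : ℝ} {Ω A : Set (Rn n)} {u v : Rn n → ℝ} {x₀ x y : Rn n}

theorem gagliardoIntegrand_nonneg (n : ℕ) (p s : ℝ) (u : Rn n → ℝ) (z : Rn n × Rn n) :
    0 ≤ gagliardoIntegrand n p s u z := by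
  unfold gagliardoIntegrand
  positivity

theorem measurable_gagliardoIntegrand (p s : ℝ) (hu : Measurable u) :
    Measurable (gagliardoIntegrand n p s u) := by
  unfold gagliardoIntegrand
  fun_prop

theorem MemX.exists_integrable_slice (hu : MemX n p s Ω u) (hA : MeasurableSet A) (hAΩ : A ⊆ Ω)
    (hA0 : volume A ≠ 0) : ∃ x ∈ A, Integrable fun y ↦ gagliardoIntegrand n p s u (x, y) := by
  have hint : Integrable (gagliardoIntegrand n p s u) ((volume.restrict A).prod volume) := by
    rw [← Measure.restrict_univ (μ := (volume : Measure (Rn n))), Measure.restrict_restrict hA,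
      Measure.prod_restrict, inter_univ]
    exact hu.2.2.mono_set fun z hz ↦ Or.inl (hAΩ hz.1)
  have : (ae (volume.restrict A)).NeBot := ae_restrict_neBot.mpr hA0
  exact ((ae_restrict_mem hA).and hint.prod_right_ae).exists

/-- The integrand of `tail n p s v x₀ R`, extended by zero to all of `ℝⁿ`. -/
def tailDensity (n : ℕ) (p s : ℝ) (v : Rn n → ℝ) (x₀ : Rn n) (R : ℝ) : Rn n → ℝ :=
  (ball x₀ R)ᶜ.indicator fun y ↦ |v y| ^ (p - 1) * ‖y - x₀‖ ^ (-(n : ℝ) - p * s)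

theorem tailDensity_nonneg (n : ℕ) (p s : ℝ) (v : Rn n → ℝ) (x₀ : Rn n) (R : ℝ) (y : Rn n) :
    0 ≤ tailDensity n p s v x₀ R y :=
  indicator_nonneg (fun _ _ ↦ by positivity) y

theorem tail_integrand_le_add_gagliardoIntegrand (hp : 1 < p) (hs : 0 ≤ s) (hvu : |v y| ≤ |u y|)
    (hx : x ∈ ball x₀ R) (hy : y ∉ ball x₀ R) :
    |v y| ^ (p - 1) * ‖y - x₀‖ ^ (-(n : ℝ) - p * s) ≤
      (1 + 2 ^ p * |u x| ^ p) * ‖y - x₀‖ ^ (-(n : ℝ) - p * s) +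
        2 ^ p * 2 ^ (n + p * s) * gagliardoIntegrand n p s u (x, y) := by
  have hxy : 0 < ‖x - y‖ := norm_sub_pos_iff.mpr (ne_of_mem_of_not_mem hx hy)
  rw [mem_ball_iff_norm] at hx
  rw [mem_ball_iff_norm, not_lt] at hy
  have hpow : |v y| ^ (p - 1) ≤ 1 + 2 ^ p * (|u x| ^ p + |u x - u y| ^ p) :=
    calc |v y| ^ (p - 1) ≤ |u y| ^ (p - 1) * 1 := by rw [mul_one]; gcongr
      _ ≤ |u y| ^ p + 1 ^ p := rpow_sub_one_mul_le hp (abs_nonneg _) zero_le_one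
      _ ≤ (|u x| + |u x - u y|) ^ p + 1 := by
          rw [Real.one_rpow]
          gcongr
          linarith [abs_sub_abs_le_abs_sub (u y) (u x), abs_sub_comm (u y) (u x)]
      _ ≤ 2 ^ p * (|u x| ^ p + |u x - u y| ^ p) + 1 := by
          gcongr
          exact add_rpow_le_two_rpow_mul (by linarith) (abs_nonneg _) (abs_nonneg _)
      _ = _ := add_comm _ _
  have hdist : ‖y - x₀‖ ^ (-(n : ℝ) - p * s) ≤ 2 ^ (n + p * s) * ‖x - y‖ ^ (-(n : ℝ) - p * s) := by
    rw [← neg_add']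
    refine rpow_neg_le_of_le_mul (by positivity) hxy zero_le_two ?_
    linarith [norm_sub_le_norm_sub_add_norm_sub x x₀ y, norm_sub_rev x₀ y]
  calc |v y| ^ (p - 1) * ‖y - x₀‖ ^ (-(n : ℝ) - p * s)
      ≤ (1 + 2 ^ p * (|u x| ^ p + |u x - u y| ^ p)) * ‖y - x₀‖ ^ (-(n : ℝ) - p * s) := by gcongr
    _ = (1 + 2 ^ p * |u x| ^ p) * ‖y - x₀‖ ^ (-(n : ℝ) - p * s) +
          2 ^ p * |u x - u y| ^ p * ‖y - x₀‖ ^ (-(n : ℝ) - p * s) := by ring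
    _ ≤ (1 + 2 ^ p * |u x| ^ p) * ‖y - x₀‖ ^ (-(n : ℝ) - p * s) +
          2 ^ p * |u x - u y| ^ p * (2 ^ (n + p * s) * ‖x - y‖ ^ (-(n : ℝ) - p * s)) := by gcongr
    _ = _ := by rw [gagliardoIntegrand]; ring

variable [NeZero n]

theorem sphereArea_pos : 0 < sphereArea n :=
  mul_pos (Nat.cast_pos.mpr (NeZero.pos n))
    (ENNReal.toReal_pos (measure_ball_pos volume _ one_pos).ne' measure_ball_lt_top.ne)

theorem integral_tailDensity (hp : p ≠ 1) (hps : 0 < p * s) (hR : 0 < R) (v : Rn n → ℝ)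
    (x₀ : Rn n) :
    ∫ y, tailDensity n p s v x₀ R y =
      sphereArea n / (p * s) * R ^ (-(p * s)) * tail n p s v x₀ R ^ (p - 1) := by
  have hS : 0 < sphereArea n := sphereArea_pos
  have : 0 ≤ ∫ y in (ball x₀ R)ᶜ, |v y| ^ (p - 1) * ‖y - x₀‖ ^ (-(n : ℝ) - p * s) :=
    integral_nonneg fun y ↦ by positivity
  have hRps : R ^ (p * s) ≠ 0 := (Real.rpow_pos_of_pos hR _).ne'
  unfold tailDensity tail
  rw [integral_indicator measurableSet_ball.compl, one_div,
    Real.rpow_inv_rpow (by positivity) (sub_ne_zero.mpr hp), Real.rpow_neg hR.le]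
  field_simp
  rw [mul_div_cancel_left₀ _ hps.ne']

theorem MemX.integrable_tailDensity (hu : MemX n p s Ω u) (hp : 1 < p) (hs : 0 < s) (hR : 0 < R)
    (hR_sub : ball x₀ R ⊆ Ω) (hv : Measurable v) (hvu : ∀ y, |v y| ≤ |u y|) :
    Integrable (tailDensity n p s v x₀ R) := by
  obtain ⟨x, hx, hslice⟩ :=
    hu.exists_integrable_slice measurableSet_ball hR_sub (measure_ball_pos volume x₀ hR).ne'
  have hpow : IntegrableOn (fun y ↦ ‖y - x₀‖ ^ (-(n : ℝ) - p * s)) (ball x₀ R)ᶜ :=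
    integrableOn_compl_ball_norm_sub_rpow
      (by rw [finrank_euclideanSpace_fin]; nlinarith) hR x₀
  refine (integrable_indicator_iff measurableSet_ball.compl).mpr <|
    ((hpow.const_mul (1 + 2 ^ p * |u x| ^ p)).add
      (hslice.integrableOn.const_mul (2 ^ p * 2 ^ (n + p * s)))).mono'
      (by fun_prop) ((ae_restrict_iff' measurableSet_ball.compl).mpr (ae_of_all _ fun y hy ↦ ?_))
  rw [Real.norm_of_nonneg (by positivity)]
  exact tail_integrand_le_add_gagliardoIntegrand hp hs.le (hvu y) hx hy

end Tail

/-! ### The logarithmic test function -/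

section LogTest

/-- The test function `ψ^p (u₊ + b)^{1-p}` of the logarithmic estimate, where `ψ` is a cutoff. -/
def logTest {X : Type*} (p b : ℝ) (ψ u : X → ℝ) (x : X) : ℝ :=
  ψ x ^ p * (max (u x) 0 + b) ^ (1 - p)

variable {X : Type*} {p b : ℝ} {ψ u : X → ℝ} {x y : X}

theorem logTest_nonneg (p : ℝ) (hb : 0 ≤ b) (hψ : 0 ≤ ψ x) : 0 ≤ logTest p b ψ u x :=
  have := le_max_right (u x) 0
  mul_nonneg (by positivity) (by positivity)

theorem logTest_eq_zero (hp : p ≠ 0) (hψ : ψ x = 0) : logTest p b ψ u x = 0 := by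
  rw [logTest, hψ, Real.zero_rpow hp, zero_mul]

theorem max_add_rpow_one_sub_le (hp : 1 ≤ p) (hb : 0 < b) (a : ℝ) :
    (max a 0 + b) ^ (1 - p) ≤ b ^ (1 - p) :=
  Real.rpow_le_rpow_of_nonpos hb (le_add_of_nonneg_left (le_max_right a 0)) (by linarith)

theorem abs_logTest_le (hp : 1 ≤ p) (hb : 0 < b) (hψ : ψ x ∈ Icc 0 1) :
    |logTest p b ψ u x| ≤ b ^ (1 - p) := by
  have hψp : ψ x ^ p ≤ 1 := Real.rpow_le_one hψ.1 hψ.2 (by linarith)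
  rw [abs_of_nonneg (logTest_nonneg p hb.le hψ.1)]
  exact (mul_le_mul hψp (max_add_rpow_one_sub_le hp hb (u x)) (by positivity) zero_le_one).trans_eq
    (one_mul _)

theorem abs_logTest_sub_le (hp : 1 ≤ p) (hb : 0 < b) (hx : ψ x ∈ Icc 0 1) (hy : ψ y ∈ Icc 0 1) :
    |logTest p b ψ u x - logTest p b ψ u y| ≤
      (p - 1) * b ^ (-p) * |u x - u y| + b ^ (1 - p) * p * |ψ x - ψ y| := by
  have hbu : ∀ t, b ≤ max (u t) 0 + b := fun t ↦ le_add_of_nonneg_left (le_max_right (u t) 0)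
  have hu : |(max (u x) 0 + b) ^ (1 - p) - (max (u y) 0 + b) ^ (1 - p)| ≤
      (p - 1) * b ^ (-p) * |u x - u y| := by
    refine (abs_rpow_one_sub_sub_le hp hb (hbu x) (hbu y)).trans ?_
    have : 0 ≤ p - 1 := sub_nonneg.mpr hp
    rw [add_sub_add_right_eq_sub]
    exact mul_le_mul_of_nonneg_left (abs_max_sub_max_le_abs (u x) (u y) 0) (by positivity)
  have hψx : ψ x ^ p ≤ 1 := Real.rpow_le_one hx.1 hx.2 (by linarith)
  have huy := max_add_rpow_one_sub_le hp hb (u y)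
  have huy0 : 0 ≤ max (u y) 0 + b := hb.le.trans (hbu y)
  have hx0 := hx.1
  calc |logTest p b ψ u x - logTest p b ψ u y|
      = |ψ x ^ p * ((max (u x) 0 + b) ^ (1 - p) - (max (u y) 0 + b) ^ (1 - p)) +
          (max (u y) 0 + b) ^ (1 - p) * (ψ x ^ p - ψ y ^ p)| := by
        unfold logTest
        ring_nf
    _ ≤ ψ x ^ p * |(max (u x) 0 + b) ^ (1 - p) - (max (u y) 0 + b) ^ (1 - p)| +
          (max (u y) 0 + b) ^ (1 - p) * |ψ x ^ p - ψ y ^ p| := by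
        refine (abs_add_le _ _).trans_eq ?_
        rw [abs_mul, abs_mul, abs_of_nonneg (Real.rpow_nonneg hx0 p),
          abs_of_nonneg (Real.rpow_nonneg huy0 (1 - p))]
    _ ≤ 1 * ((p - 1) * b ^ (-p) * |u x - u y|) + b ^ (1 - p) * (p * |ψ x - ψ y|) := by
        gcongr
        exact abs_rpow_sub_rpow_le hp hx hy
    _ = _ := by ring

theorem measurable_logTest [MeasurableSpace X] (p b : ℝ) (hψ : Measurable ψ) (hu : Measurable u) :
    Measurable (logTest p b ψ u) := by
  unfold logTest
  fun_prop

end LogTest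

section LogTestRn

variable {n : ℕ} {p s b : ℝ} {L : ℝ≥0} {Ω A B : Set (Rn n)} {ψ u V : Rn n → ℝ}

theorem gagliardoIntegrand_logTest_le (hp : 1 ≤ p) (s : ℝ) (hb : 0 < b) (hψ : IsCutoff ψ L A B)
    (z : Rn n × Rn n) :
    gagliardoIntegrand n p s (logTest p b ψ u) z ≤
      2 ^ p * (((p - 1) * b ^ (-p)) ^ p * gagliardoIntegrand n p s u z +
        (b ^ (1 - p) * p) ^ p * nearMajorant p (-n - p * s) L B z) := by
  have : 0 ≤ p - 1 := sub_nonneg.mpr hp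
  have hpow : |logTest p b ψ u z.1 - logTest p b ψ u z.2| ^ p ≤
      2 ^ p * (((p - 1) * b ^ (-p)) ^ p * |u z.1 - u z.2| ^ p +
        (b ^ (1 - p) * p) ^ p * |ψ z.1 - ψ z.2| ^ p) := by
    calc _ ≤ ((p - 1) * b ^ (-p) * |u z.1 - u z.2| + b ^ (1 - p) * p * |ψ z.1 - ψ z.2|) ^ p := by
          gcongr
          exact abs_logTest_sub_le hp hb (hψ.mem_Icc _) (hψ.mem_Icc _)
      _ ≤ _ := add_rpow_le_two_rpow_mul (by linarith) (by positivity) (by positivity)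
      _ = _ := by
          rw [Real.mul_rpow (by positivity) (abs_nonneg _),
            Real.mul_rpow (by positivity) (abs_nonneg _)]
  calc gagliardoIntegrand n p s (logTest p b ψ u) z
      ≤ 2 ^ p * (((p - 1) * b ^ (-p)) ^ p * |u z.1 - u z.2| ^ p +
          (b ^ (1 - p) * p) ^ p * |ψ z.1 - ψ z.2| ^ p) * ‖z.1 - z.2‖ ^ (-(n : ℝ) - p * s) := by
        unfold gagliardoIntegrand
        gcongr
    _ = 2 ^ p * (((p - 1) * b ^ (-p)) ^ p * gagliardoIntegrand n p s u z + (b ^ (1 - p) * p) ^ p *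
          (|ψ z.1 - ψ z.2| ^ p * ‖z.1 - z.2‖ ^ (-(n : ℝ) - p * s))) := by
        rw [gagliardoIntegrand]
        ring
    _ ≤ _ := by
        gcongr
        exact hψ.abs_sub_rpow_mul_le_nearMajorant (by linarith) _ z

theorem memLpV_logTest (hp : 1 ≤ p) (hb : 0 < b) (hψ : IsCutoff ψ L A B) (hu : Measurable u)
    (hVpos : IntegrableOn (plusPart V) Ω) (hVneg : IntegrableOn (minusPart V) Ω) :
    MemLpV n p Ω V (logTest p b ψ u) := by
  have hmeas := measurable_logTest p b hψ.lipschitz.continuous.measurable hu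
  have hbdd : ∀ x, ‖|logTest p b ψ u x| ^ p‖ ≤ (b ^ (1 - p)) ^ p := fun x ↦ by
    rw [Real.norm_of_nonneg (by positivity)]
    exact Real.rpow_le_rpow (abs_nonneg _) (abs_logTest_le hp hb (hψ.mem_Icc x)) (by linarith)
  have hmeas_pow := (hmeas.norm.pow_const p).aestronglyMeasurable (μ := volume.restrict Ω)
  exact ⟨hVpos.bdd_mul hmeas_pow (ae_of_all _ hbdd), hVneg.bdd_mul hmeas_pow (ae_of_all _ hbdd)⟩

theorem integrable_nearMajorant_Rn [NeZero n] (hp : 0 < p) (hs0 : 0 < s) (hs1 : s < 1) (hL : 0 < L)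
    (hB : MeasurableSet B) (hBfin : volume B ≠ ∞) :
    Integrable (nearMajorant p (-n - p * s) L B) := by
  refine integrable_nearMajorant ?_ ?_ hL hB hBfin <;> rw [finrank_euclideanSpace_fin] <;> nlinarith

theorem integral_nearMajorant_Rn [NeZero n] (hp : 0 < p) (hs0 : 0 < s) (hs1 : s < 1) (hL : 0 < L)
    (hB : MeasurableSet B) (hBfin : volume B ≠ ∞) :
    ∫ z, nearMajorant p (-n - p * s) L B z =
      2 * (volume.real B * (L ^ (p * s) * ∫ z : Rn n, truncKernel p (-n - p * s) 1 z)) := by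
  have hint := integral_nearMajorant (μ := (volume : Measure (Rn n))) (p := p) (e := -n - p * s)
    (by rw [finrank_euclideanSpace_fin]; nlinarith) (by rw [finrank_euclideanSpace_fin]; nlinarith)
    hL hB hBfin
  rw [Measure.volume_eq_prod, hint, finrank_euclideanSpace_fin]
  ring_nf

theorem MemX.memX0_logTest [NeZero n] (hu : MemX n p s Ω u) (hp : 1 ≤ p) (hs0 : 0 < s)
    (hs1 : s < 1) (hΩ : volume Ω ≠ ∞) (hb : 0 < b) (hψ : IsCutoff ψ L A B) (hL : 0 < L)
    (hB : MeasurableSet B) (hBΩ : B ⊆ Ω) : MemX0 n p s Ω (logTest p b ψ u) := by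
  have hmeas := measurable_logTest p b hψ.lipschitz.continuous.measurable hu.1
  have hnear : Integrable (nearMajorant p (-n - p * s) L B) :=
    integrable_nearMajorant_Rn (by linarith) hs0 hs1 hL hB (measure_ne_top_of_subset hBΩ hΩ)
  refine ⟨⟨hmeas, ?_, ?_⟩, ae_of_all _ fun x hx ↦
    logTest_eq_zero (by linarith) (hψ.eq_zero x fun h ↦ hx (hBΩ h))⟩
  · refine (integrableOn_const hΩ (C := (b ^ (1 - p)) ^ p)).mono'
      (hmeas.norm.pow_const p).aestronglyMeasurable (ae_of_all _ fun x ↦ ?_)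
    rw [Real.norm_of_nonneg (by positivity)]
    exact Real.rpow_le_rpow (abs_nonneg _) (abs_logTest_le hp hb (hψ.mem_Icc x)) (by linarith)
  · have hdom := ((hu.2.2.const_mul (((p - 1) * b ^ (-p)) ^ p)).add
      (hnear.integrableOn.const_mul ((b ^ (1 - p) * p) ^ p))).const_mul (2 ^ p)
    refine hdom.mono' (measurable_gagliardoIntegrand p s hmeas).aestronglyMeasurable
      (ae_of_all _ fun z ↦ ?_)
    rw [Real.norm_of_nonneg (gagliardoIntegrand_nonneg n p s _ z)]
    exact gagliardoIntegrand_logTest_le hp s hb hψ z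

end LogTestRn

/-! ### The nonlocal energy tested with the logarithmic test function -/

section Kernel

/-- `K` is a measurable nonnegative kernel with the upper bound `C |y|^{-n-ps}`. -/
def HasKernelBound (n : ℕ) (p s C : ℝ) (K : Rn n → ℝ) : Prop :=
  Measurable K ∧ ∀ y : Rn n, y ≠ 0 → 0 ≤ K y ∧ K y ≤ C * ‖y‖ ^ (-(n : ℝ) - p * s)

/-- The integrand of `pairing n p K u φ`. -/
def pairingIntegrand {n : ℕ} (p : ℝ) (K u φ : Rn n → ℝ) (z : Rn n × Rn n) : ℝ :=
  Hp p (u z.1 - u z.2) * (φ z.1 - φ z.2) * K (z.1 - z.2)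

/-- The left-hand integrand `|ln ((u(x) + b) / (u(y) + b))|^p K(x - y)` of the estimate. -/
def logIntegrand {n : ℕ} (p b : ℝ) (K u : Rn n → ℝ) (z : Rn n × Rn n) : ℝ :=
  |Real.log ((u z.1 + b) / (u z.2 + b))| ^ p * K (z.1 - z.2)

variable {n : ℕ} {p s C lam Lam b : ℝ} {Ω : Set (Rn n)} {K u φ : Rn n → ℝ} {z : Rn n × Rn n}

theorem cnps_pos (n : ℕ) (hp : 0 < p) (hs : s < 1) : 0 < cnps n p s := by
  have : 0 < 1 - s := sub_pos.mpr hs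
  have : 0 < Real.Gamma ((n + p) / 2) := Real.Gamma_pos_of_pos (by positivity)
  have : 0 < Real.Gamma ((p + 1) / 2) := Real.Gamma_pos_of_pos (by positivity)
  unfold cnps
  positivity

theorem KernelClass.hasKernelBound (hK : KernelClass n p s lam Lam K) (hp : 0 < p) (hs : s < 1)
    (hlam : 0 ≤ lam) : HasKernelBound n p s (cnps n p s * Lam) K :=
  have hc := cnps_pos n hp hs
  ⟨hK.1, fun y hy ↦ ⟨le_trans (by positivity) (hK.2.2 y hy).1, (hK.2.2 y hy).2⟩⟩

theorem measurable_Hp (p : ℝ) : Measurable (Hp p) := by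
  unfold Hp
  fun_prop

theorem measurable_pairingIntegrand (p : ℝ) (hK : Measurable K) (hu : Measurable u)
    (hφ : Measurable φ) : Measurable (pairingIntegrand p K u φ) := by
  have := measurable_Hp p
  unfold pairingIntegrand
  fun_prop

theorem measurable_logIntegrand (p b : ℝ) (hK : Measurable K) (hu : Measurable u) :
    Measurable (logIntegrand p b K u) := by
  unfold logIntegrand
  fun_prop

theorem abs_pairingIntegrand_le (hK : HasKernelBound n p s C K) (hp : 1 < p) (hC : 0 ≤ C)
    (u φ : Rn n → ℝ) (z : Rn n × Rn n) :
    |pairingIntegrand p K u φ z| ≤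
      C * (gagliardoIntegrand n p s u z + gagliardoIntegrand n p s φ z) := by
  rcases eq_or_ne z.1 z.2 with hz | hz
  · rw [pairingIntegrand, hz, sub_self, sub_self, mul_zero, zero_mul, abs_zero]
    exact mul_nonneg hC (add_nonneg (gagliardoIntegrand_nonneg _ _ _ _ _)
      (gagliardoIntegrand_nonneg _ _ _ _ _))
  obtain ⟨hK0, hKC⟩ := hK.2 _ (sub_ne_zero.mpr hz)
  rw [pairingIntegrand, abs_mul, abs_mul, abs_Hp hp.ne', abs_of_nonneg hK0]
  calc |u z.1 - u z.2| ^ (p - 1) * |φ z.1 - φ z.2| * K (z.1 - z.2)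
      ≤ (|u z.1 - u z.2| ^ p + |φ z.1 - φ z.2| ^ p) *
          (C * ‖z.1 - z.2‖ ^ (-(n : ℝ) - p * s)) := by
        gcongr
        exact rpow_sub_one_mul_le hp (abs_nonneg _) (abs_nonneg _)
    _ = _ := by
        unfold gagliardoIntegrand
        ring

theorem HasKernelBound.integrable_pairingIntegrand (hK : HasKernelBound n p s C K) (hp : 1 < p)
    (hC : 0 ≤ C) (hu : MemX n p s Ω u) (hφ : MemX0 n p s Ω φ) :
    Integrable (pairingIntegrand p K u φ) := by
  have hon : IntegrableOn (pairingIntegrand p K u φ) (R2n n Ω) :=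
    ((hu.2.2.add hφ.1.2.2).const_mul C).mono'
      (measurable_pairingIntegrand p hK.1 hu.1 hφ.1.1).aestronglyMeasurable
      (ae_of_all _ (abs_pairingIntegrand_le hK hp hC u φ))
  refine hon.integrable_of_ae_notMem_eq_zero ?_
  filter_upwards [Measure.quasiMeasurePreserving_fst.ae hφ.2,
    Measure.quasiMeasurePreserving_snd.ae hφ.2] with z hz₁ hz₂ hz
  obtain ⟨hz₁', hz₂'⟩ := not_or.mp hz
  rw [pairingIntegrand, hz₁ hz₁', hz₂ hz₂', sub_self, mul_zero, zero_mul]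

end Kernel

section Pointwise

variable {n : ℕ} {p s C b r R : ℝ} {L : ℝ≥0} {A B : Set (Rn n)} {K u ψ : Rn n → ℝ}
  {x₀ x y : Rn n} {z : Rn n × Rn n}

/-- The symmetric majorant `1_B(x) G(y) + 1_B(y) G(x)` of the interaction of `B` with the far
region in which the density `G` lives. -/
def farMajorant (B : Set (Rn n)) (G : Rn n → ℝ) : Rn n × Rn n → ℝ :=
  symmSum fun z ↦ B.indicator 1 z.1 * G z.2

theorem farMajorant_nonneg {G : Rn n → ℝ} (hG : ∀ y, 0 ≤ G y) (B : Set (Rn n))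
    (z : Rn n × Rn n) : 0 ≤ farMajorant B G z :=
  have hB : ∀ x, 0 ≤ B.indicator (1 : Rn n → ℝ) x := indicator_nonneg fun _ _ ↦ zero_le_one
  add_nonneg (mul_nonneg (hB _) (hG _)) (mul_nonneg (hB _) (hG _))

theorem norm_sub_le_four_mul_norm_sub (hrR : r ≤ R / 2) (hx : x ∈ ball x₀ (r * (3 / 2)))
    (hy : y ∉ ball x₀ R) : ‖y - x₀‖ ≤ 4 * ‖x - y‖ := by
  rw [mem_ball_iff_norm] at hx
  rw [mem_ball_iff_norm, not_lt] at hy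
  linarith [norm_sub_le_norm_sub_add_norm_sub y x x₀, norm_sub_rev x y]

theorem IsCutoff.rpow_mul_minusPart_rpow_le (hψ : IsCutoff ψ L A (ball x₀ (r * (3 / 2))))
    (hp : 1 < p) (hs : 0 ≤ s) (hR : 0 < R) (hrR : r ≤ R / 2) (hu : ∀ x ∈ ball x₀ R, 0 ≤ u x)
    (x y : Rn n) :
    minusPart u y ^ (p - 1) * ψ x ^ p * ‖x - y‖ ^ (-(n : ℝ) - p * s) ≤
      4 ^ (n + p * s) * ((ball x₀ (r * (3 / 2))).indicator 1 x *
        tailDensity n p s (minusPart u) x₀ R y) := by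
  have hG := tailDensity_nonneg n p s (minusPart u) x₀ R y
  by_cases hx : x ∈ ball x₀ (r * (3 / 2)); swap
  · rw [hψ.eq_zero x hx, Real.zero_rpow (by linarith), mul_zero, zero_mul,
      indicator_of_notMem hx, zero_mul, mul_zero]
  by_cases hy : y ∈ ball x₀ R
  · rw [minusPart, max_eq_right (neg_nonpos.mpr (hu y hy)),
      Real.zero_rpow (sub_ne_zero.mpr hp.ne'), zero_mul, zero_mul, indicator_of_mem hx]
    simp only [Pi.one_apply, one_mul]
    positivity
  have hneg : 0 ≤ minusPart u y := le_max_right _ _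
  have hψx := hψ.mem_Icc x
  have hy0 : 0 < ‖y - x₀‖ := hR.trans_le (by rwa [mem_ball_iff_norm, not_lt] at hy)
  have hdist : ‖x - y‖ ^ (-(n : ℝ) - p * s) ≤ 4 ^ (n + p * s) * ‖y - x₀‖ ^ (-(n : ℝ) - p * s) := by
    rw [← neg_add']
    exact rpow_neg_le_of_le_mul (by positivity) hy0 (by norm_num)
      (norm_sub_le_four_mul_norm_sub hrR hx hy)
  have hψp : ψ x ^ p ≤ 1 := Real.rpow_le_one hψx.1 hψx.2 (by linarith)
  rw [tailDensity, indicator_of_mem hx, indicator_of_mem (mem_compl hy), Pi.one_apply, one_mul,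
    abs_of_nonneg hneg]
  calc minusPart u y ^ (p - 1) * ψ x ^ p * ‖x - y‖ ^ (-(n : ℝ) - p * s)
      ≤ minusPart u y ^ (p - 1) * 1 * (4 ^ (n + p * s) * ‖y - x₀‖ ^ (-(n : ℝ) - p * s)) := by
        have := Real.rpow_nonneg hψx.1 p
        gcongr
    _ = _ := by ring

theorem HasKernelBound.pairingIntegrand_logTest_le_neg_logIntegrand
    (hK : HasKernelBound n p s C K) (hψ : IsCutoff ψ L A B) (hp : 1 < p) (hb : 0 < b)
    (hu : ∀ x ∈ A, 0 ≤ u x) (hz : z ∈ A ×ˢ A) :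
    pairingIntegrand p K u (logTest p b ψ u) z ≤ -((p - 1) * logIntegrand p b K u z) := by
  have hu₁ := hu _ hz.1
  have hu₂ := hu _ hz.2
  rcases eq_or_ne z.1 z.2 with hzz | hzz
  · have hne : u z.2 + b ≠ 0 := (add_pos_of_nonneg_of_pos hu₂ hb).ne'
    rw [pairingIntegrand, logIntegrand, hzz, div_self hne, Real.log_one, abs_zero,
      Real.zero_rpow (by linarith), sub_self, sub_self, mul_zero, zero_mul, mul_zero, neg_zero]
  have hlog := Hp_sub_mul_rpow_sub_le_log hp (add_pos_of_nonneg_of_pos hu₁ hb)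
    (add_pos_of_nonneg_of_pos hu₂ hb)
  rw [add_sub_add_right_eq_sub] at hlog
  rw [pairingIntegrand, logIntegrand, logTest, logTest, hψ.eq_one _ hz.1, hψ.eq_one _ hz.2,
    max_eq_left hu₁, max_eq_left hu₂, Real.one_rpow, one_mul, one_mul, ← mul_assoc, ← neg_mul]
  exact mul_le_mul_of_nonneg_right hlog (hK.2 _ (sub_ne_zero.mpr hzz)).1

/-- The majorant of the pairing integrand of `logTest`: a local part and a tail part. -/
def pairingMajorant (n : ℕ) (p s C b : ℝ) (u : Rn n → ℝ) (x₀ : Rn n) (r R : ℝ) (L : ℝ≥0)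
    (z : Rn n × Rn n) : ℝ :=
  2 ^ (p - 1) * C * nearMajorant p (-n - p * s) L (ball x₀ (r * (3 / 2))) z +
    2 ^ (p - 1) * b ^ (1 - p) * C * 4 ^ (n + p * s) *
      farMajorant (ball x₀ (r * (3 / 2))) (tailDensity n p s (minusPart u) x₀ R) z

theorem pairingMajorant_nonneg (hC : 0 ≤ C) (hb : 0 ≤ b) (u : Rn n → ℝ) (x₀ : Rn n) (r R : ℝ)
    (L : ℝ≥0) (z : Rn n × Rn n) : 0 ≤ pairingMajorant n p s C b u x₀ r R L z := by
  have hnear := nearMajorant_nonneg p (-n - p * s) L (ball x₀ (r * (3 / 2))) z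
  have hfar := farMajorant_nonneg (tailDensity_nonneg n p s (minusPart u) x₀ R)
    (ball x₀ (r * (3 / 2))) z
  unfold pairingMajorant
  positivity

theorem HasKernelBound.pairingIntegrand_logTest_le_pairingMajorant
    (hK : HasKernelBound n p s C K) (hC : 0 ≤ C)
    (hψ : IsCutoff ψ L A (ball x₀ (r * (3 / 2)))) (hp : 1 < p) (hs : 0 ≤ s) (hb : 0 < b)
    (hR : 0 < R) (hrR : r ≤ R / 2) (hu : ∀ x ∈ ball x₀ R, 0 ≤ u x) (z : Rn n × Rn n) :
    pairingIntegrand p K u (logTest p b ψ u) z ≤ pairingMajorant n p s C b u x₀ r R L z := by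
  rcases eq_or_ne z.1 z.2 with hz | hz
  · rw [pairingIntegrand, hz, sub_self, sub_self, mul_zero, zero_mul]
    exact pairingMajorant_nonneg hC hb.le u x₀ r R L z
  have hψ_neg : ∀ x, u x < 0 → ψ x = 0 := fun x hx ↦ hψ.eq_zero x fun hxB ↦
    hx.not_ge (hu x (ball_subset_ball (by linarith) hxB))
  have hψ₁ := (hψ.mem_Icc z.1).1
  have hψ₂ := (hψ.mem_Icc z.2).1
  obtain ⟨hK0, hKC⟩ := hK.2 _ (sub_ne_zero.mpr hz)
  have hneg : ∀ x, 0 ≤ minusPart u x := fun x ↦ le_max_right _ _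
  have hneg₁ := hneg z.1
  have hneg₂ := hneg z.2
  have hnear := hψ.abs_sub_rpow_mul_le_nearMajorant (zero_lt_one.trans hp) (-n - p * s) z
  have hfar₁ := hψ.rpow_mul_minusPart_rpow_le hp hs hR hrR hu z.1 z.2
  have hfar₂ := hψ.rpow_mul_minusPart_rpow_le hp hs hR hrR hu z.2 z.1
  rw [norm_sub_rev] at hfar₂
  calc pairingIntegrand p K u (logTest p b ψ u) z
      ≤ (2 ^ (p - 1) * |ψ z.1 - ψ z.2| ^ p + 2 ^ (p - 1) * b ^ (1 - p) *
          (minusPart u z.2 ^ (p - 1) * ψ z.1 ^ p + minusPart u z.1 ^ (p - 1) * ψ z.2 ^ p)) *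
          K (z.1 - z.2) :=
        mul_le_mul_of_nonneg_right (Hp_sub_mul_test_sub_le hp hb hψ₁ hψ₂ (hψ_neg _) (hψ_neg _)) hK0
    _ ≤ (2 ^ (p - 1) * |ψ z.1 - ψ z.2| ^ p + 2 ^ (p - 1) * b ^ (1 - p) *
          (minusPart u z.2 ^ (p - 1) * ψ z.1 ^ p + minusPart u z.1 ^ (p - 1) * ψ z.2 ^ p)) *
          (C * ‖z.1 - z.2‖ ^ (-(n : ℝ) - p * s)) := by gcongr
    _ = 2 ^ (p - 1) * C * (|ψ z.1 - ψ z.2| ^ p * ‖z.1 - z.2‖ ^ (-(n : ℝ) - p * s)) +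
          2 ^ (p - 1) * b ^ (1 - p) * C *
            (minusPart u z.2 ^ (p - 1) * ψ z.1 ^ p * ‖z.1 - z.2‖ ^ (-(n : ℝ) - p * s) +
              minusPart u z.1 ^ (p - 1) * ψ z.2 ^ p * ‖z.1 - z.2‖ ^ (-(n : ℝ) - p * s)) := by ring
    _ ≤ 2 ^ (p - 1) * C * nearMajorant p (-n - p * s) L (ball x₀ (r * (3 / 2))) z +
          2 ^ (p - 1) * b ^ (1 - p) * C *
            (4 ^ (n + p * s) * ((ball x₀ (r * (3 / 2))).indicator 1 z.1 *
                tailDensity n p s (minusPart u) x₀ R z.2) +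
              4 ^ (n + p * s) * ((ball x₀ (r * (3 / 2))).indicator 1 z.2 *
                tailDensity n p s (minusPart u) x₀ R z.1)) := by gcongr
    _ = pairingMajorant n p s C b u x₀ r R L z := by
        simp only [pairingMajorant, farMajorant, symmSum, Prod.fst_swap, Prod.snd_swap]
        ring

end Pointwise

/-! ### The potential term -/

section Potential

variable {X : Type*} [MeasurableSpace X] {μ : Measure X} {f : X → ℝ} {n : ℕ} {p q b r : ℝ}
  {Ω A B : Set (Rn n)} {V u ψ : Rn n → ℝ} {L : ℝ≥0} {x₀ : Rn n}

theorem memLp_of_integrable_rpow (hf : AEStronglyMeasurable f μ) (hf0 : ∀ x, 0 ≤ f x)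
    (hq : 0 < q) (hfq : Integrable (fun x ↦ f x ^ q) μ) : MemLp f (ENNReal.ofReal q) μ := by
  rw [← integrable_norm_rpow_iff hf (ENNReal.ofReal_pos.mpr hq).ne' ENNReal.ofReal_ne_top,
    ENNReal.toReal_ofReal hq.le]
  simpa only [Real.norm_of_nonneg (hf0 _)] using hfq

theorem integral_le_integral_rpow_mul_measureReal_rpow [IsFiniteMeasure μ] (hq : 1 ≤ q)
    (hf0 : ∀ x, 0 ≤ f x) (hf : MemLp f (ENNReal.ofReal q) μ) :
    ∫ x, f x ∂μ ≤ (∫ x, f x ^ q ∂μ) ^ (1 / q) * μ.real univ ^ (1 - 1 / q) := by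
  rcases hq.eq_or_lt with rfl | hq
  · simp only [Real.rpow_one, div_one, sub_self, Real.rpow_zero, mul_one, le_refl]
  have hconj := Real.HolderConjugate.conjExponent hq
  have hexp : 1 / q.conjExponent = 1 - 1 / q := by
    rw [one_div, one_div, ← hconj.inv_add_inv_eq_one, add_sub_cancel_left]
  have hholder := integral_mul_le_Lp_mul_Lq_of_nonneg hconj (ae_of_all μ hf0)
    (ae_of_all μ fun _ ↦ zero_le_one) hf (memLp_const 1)
  simpa only [mul_one, Real.one_rpow, integral_const, smul_eq_mul, hexp] using hholder

theorem plusPart_nonneg (V : Rn n → ℝ) (x : Rn n) : 0 ≤ plusPart V x := le_max_right _ _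

theorem measurable_plusPart (hV : Measurable V) : Measurable (plusPart V) :=
  hV.max measurable_const

theorem memLp_plusPart (hq : 0 < q) (hV : Measurable V)
    (hVq : IntegrableOn (fun x ↦ plusPart V x ^ q) Ω) :
    MemLp (plusPart V) (ENNReal.ofReal q) (volume.restrict Ω) :=
  memLp_of_integrable_rpow (measurable_plusPart hV).aestronglyMeasurable (plusPart_nonneg V) hq hVq

theorem integrableOn_plusPart (hq : 1 ≤ q) (hΩ : volume Ω ≠ ∞) (hV : Measurable V)
    (hVq : IntegrableOn (fun x ↦ plusPart V x ^ q) Ω) : IntegrableOn (plusPart V) Ω := by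
  have := isFiniteMeasure_restrict.mpr hΩ
  exact (memLp_plusPart (by linarith) hV hVq).integrable (ENNReal.one_le_ofReal.mpr hq)

theorem lqNormOn_of_nonneg (q : ℝ) (B : Set (Rn n)) {f : Rn n → ℝ} (hf0 : ∀ x, 0 ≤ f x) :
    lqNormOn n q B f = (∫ x in B, f x ^ q) ^ (1 / q) := by
  simp only [lqNormOn, abs_of_nonneg (hf0 _)]

theorem lqNormOn_nonneg (n : ℕ) (q : ℝ) (B : Set (Rn n)) (f : Rn n → ℝ) : 0 ≤ lqNormOn n q B f :=
  Real.rpow_nonneg (integral_nonneg fun _ ↦ by positivity) _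

theorem setIntegral_plusPart_le_lqNormOn (hq : 1 ≤ q) (hΩ : volume Ω ≠ ∞) (hBΩ : B ⊆ Ω)
    (hV : Measurable V) (hVq : IntegrableOn (fun x ↦ plusPart V x ^ q) Ω) :
    ∫ x in B, plusPart V x ≤ lqNormOn n q Ω (plusPart V) * volume.real B ^ (1 - 1 / q) := by
  have := isFiniteMeasure_restrict.mpr (measure_ne_top_of_subset hBΩ hΩ)
  have hVq_nonneg (x : Rn n) : 0 ≤ plusPart V x ^ q := Real.rpow_nonneg (plusPart_nonneg V x) q
  have hmono : ∫ x in B, plusPart V x ^ q ≤ ∫ x in Ω, plusPart V x ^ q :=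
    setIntegral_mono_set hVq (ae_of_all _ hVq_nonneg) hBΩ.eventuallyLE
  have hholder := integral_le_integral_rpow_mul_measureReal_rpow hq (plusPart_nonneg V)
    (memLp_plusPart (by linarith) hV (hVq.mono_set hBΩ))
  rw [measureReal_restrict_apply_univ] at hholder
  rw [lqNormOn_of_nonneg q Ω (plusPart_nonneg V)]
  refine hholder.trans (mul_le_mul_of_nonneg_right ?_ (by positivity))
  exact Real.rpow_le_rpow (integral_nonneg hVq_nonneg) hmono (by positivity)

theorem potential_mul_logTest_le (hψ : IsCutoff ψ L A B) (hp : 1 < p) (hb : 0 < b)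
    (hu : ∀ x ∈ B, 0 ≤ u x) (x : Rn n) :
    V x * (|u x| ^ (p - 2) * u x) * logTest p b ψ u x ≤ B.indicator (plusPart V) x := by
  by_cases hx : x ∈ B; swap
  · rw [logTest_eq_zero (by linarith) (hψ.eq_zero x hx), mul_zero, indicator_of_notMem hx]
  have hux := hu x hx
  have hψx := hψ.mem_Icc x
  have hψp : ψ x ^ p ≤ 1 := Real.rpow_le_one hψx.1 hψx.2 (by linarith)
  have hub := rpow_mul_add_rpow_le_one hp.le hux hb
  have hub0 : 0 ≤ u x ^ (p - 1) * (u x + b) ^ (1 - p) := by positivity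
  rw [indicator_of_mem hx, logTest, max_eq_left hux, ← Hp, Hp_of_nonneg hp.ne' hux]
  calc V x * u x ^ (p - 1) * (ψ x ^ p * (u x + b) ^ (1 - p))
      = V x * (ψ x ^ p * (u x ^ (p - 1) * (u x + b) ^ (1 - p))) := by ring
    _ ≤ plusPart V x * (ψ x ^ p * (u x ^ (p - 1) * (u x + b) ^ (1 - p))) :=
        mul_le_mul_of_nonneg_right (le_max_left _ _) (mul_nonneg (Real.rpow_nonneg hψx.1 p) hub0)
    _ ≤ plusPart V x :=
        mul_le_of_le_one_right (plusPart_nonneg V x) (mul_le_one₀ hψp hub0 hub)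

theorem integral_potential_mul_logTest_le (hψ : IsCutoff ψ L A B) (hp : 1 < p) (hb : 0 < b)
    (hB : MeasurableSet B) (hu : ∀ x ∈ B, 0 ≤ u x) (hV : IntegrableOn (plusPart V) B) :
    ∫ x, V x * (|u x| ^ (p - 2) * u x) * logTest p b ψ u x ≤ ∫ x in B, plusPart V x := by
  by_cases hint : Integrable fun x ↦ V x * (|u x| ^ (p - 2) * u x) * logTest p b ψ u x
  · rw [← integral_indicator hB]
    exact integral_mono hint (hV.integrable_indicator hB) (potential_mul_logTest_le hψ hp hb hu)
  · rw [integral_undef hint]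
    exact integral_nonneg (plusPart_nonneg V)

end Potential

/-! ### The logarithmic energy of a supersolution -/

section Energy

variable {n : ℕ} {p s C b r R q : ℝ} {Ω A B : Set (Rn n)} {K V g u ψ : Rn n → ℝ} {L : ℝ≥0}
  {x₀ : Rn n}

theorem HasKernelBound.logIntegrand_nonneg (hK : HasKernelBound n p s C K) (hp : p ≠ 0)
    (hb : 0 < b) {z : Rn n × Rn n} (hu : 0 ≤ u z.1) : 0 ≤ logIntegrand p b K u z := by
  rcases eq_or_ne z.1 z.2 with hz | hz
  · have hne : u z.2 + b ≠ 0 := (add_pos_of_nonneg_of_pos (hz ▸ hu) hb).ne'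
    rw [logIntegrand, hz, div_self hne, Real.log_one, abs_zero, Real.zero_rpow hp, zero_mul]
  · exact mul_nonneg (by positivity) (hK.2 _ (sub_ne_zero.mpr hz)).1

theorem HasKernelBound.integrableOn_logIntegrand (hK : HasKernelBound n p s C K)
    (hψ : IsCutoff ψ L A B) (hp : 1 < p) (hb : 0 < b) (hA : MeasurableSet A)
    (hu : ∀ x ∈ A, 0 ≤ u x) (hum : Measurable u)
    (hint : Integrable (pairingIntegrand p K u (logTest p b ψ u))) :
    IntegrableOn (logIntegrand p b K u) (A ×ˢ A) := by
  have hp1 : 0 < p - 1 := by linarith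
  refine (hint.norm.integrableOn.const_mul (p - 1)⁻¹).mono'
    (measurable_logIntegrand p b hK.1 hum).aestronglyMeasurable ?_
  refine (ae_restrict_iff' (hA.prod hA)).mpr (ae_of_all _ fun z hz ↦ ?_)
  rw [Real.norm_of_nonneg (hK.logIntegrand_nonneg (by linarith) hb (hu _ hz.1)),
    inv_mul_eq_div, le_div_iff₀' hp1]
  have hlog := hK.pairingIntegrand_logTest_le_neg_logIntegrand hψ hp hb hu hz
  exact (le_neg_of_le_neg hlog).trans (neg_le_abs _)

theorem HasKernelBound.pairing_logTest_add_le (hK : HasKernelBound n p s C K)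
    (hC : 0 ≤ C) (hψ : IsCutoff ψ L (ball x₀ r) (ball x₀ (r * (3 / 2)))) (hp : 1 < p)
    (hs : 0 ≤ s) (hb : 0 < b) (hR : 0 < R) (hrR : r ≤ R / 2) (hu : ∀ x ∈ ball x₀ R, 0 ≤ u x)
    (hint : Integrable (pairingIntegrand p K u (logTest p b ψ u)))
    (hlog : IntegrableOn (logIntegrand p b K u) (ball x₀ r ×ˢ ball x₀ r))
    (hmaj : Integrable (pairingMajorant n p s C b u x₀ r R L)) :
    pairing n p K u (logTest p b ψ u) +
        (p - 1) * ∫ z in ball x₀ r ×ˢ ball x₀ r, logIntegrand p b K u z ≤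
      ∫ z, pairingMajorant n p s C b u x₀ r R L z := by
  have hS : MeasurableSet (ball x₀ r ×ˢ ball x₀ r) := measurableSet_ball.prod measurableSet_ball
  have hlog' := (hlog.integrable_indicator hS).const_mul (p - 1)
  rw [← integral_indicator hS, ← integral_const_mul]
  refine (integral_add hint hlog').symm.trans_le (integral_mono (hint.add hlog') hmaj fun z ↦ ?_)
  by_cases hz : z ∈ ball x₀ r ×ˢ ball x₀ r
  · have hur : ∀ x ∈ ball x₀ r, 0 ≤ u x := fun x hx ↦ hu x (ball_subset_ball (by linarith) hx)
    have hmajz := pairingMajorant_nonneg (n := n) (p := p) (s := s) hC hb.le u x₀ r R L z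
    simp only [indicator_of_mem hz]
    linarith [hK.pairingIntegrand_logTest_le_neg_logIntegrand hψ hp hb hur hz]
  · simp only [indicator_of_notMem hz, mul_zero, add_zero]
    exact hK.pairingIntegrand_logTest_le_pairingMajorant hC hψ hp hs hb hR hrR hu z

theorem integrable_farMajorant {G : Rn n → ℝ} (hB : MeasurableSet B) (hBfin : volume B ≠ ∞)
    (hG : Integrable G) : Integrable (farMajorant B G) :=
  integrable_symmSum (integrable_indicator_one_mul_prod hB hBfin hG)

theorem integral_farMajorant {G : Rn n → ℝ} (hB : MeasurableSet B) (hBfin : volume B ≠ ∞)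
    (hG : Integrable G) : ∫ z, farMajorant B G z = 2 * (volume.real B * ∫ y, G y) := by
  rw [farMajorant, Measure.volume_eq_prod,
    integral_symmSum (integrable_indicator_one_mul_prod hB hBfin hG),
    integral_indicator_one_mul_prod hB]

theorem MemX.integrable_tailDensity_minusPart [NeZero n] (hu : MemX n p s Ω u) (hp : 1 < p)
    (hs : 0 < s) (hR : 0 < R) (hRΩ : ball x₀ R ⊆ Ω) :
    Integrable (tailDensity n p s (minusPart u) x₀ R) := by
  refine hu.integrable_tailDensity hp hs hR hRΩ (hu.1.neg.max measurable_const) fun y ↦ ?_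
  rw [abs_of_nonneg (le_max_right _ _)]
  exact max_le (neg_le_abs _) (abs_nonneg _)

/-- `∫ nearMajorant` at `L = 2 / r` on the ball of radius `3r/2`, divided by `r^{n-ps}`. -/
def nearConst (n : ℕ) (p s : ℝ) : ℝ :=
  2 * (volume.real (ball (0 : Rn n) (3 / 2)) *
    (2 ^ (p * s) * ∫ z : Rn n, truncKernel p (-n - p * s) 1 z))

/-- `∫ farMajorant` on the ball of radius `3r/2`, divided by `r^n R^{-ps} 𝒯_R(u_-;x₀)^{p-1}`. -/
def farConst (n : ℕ) (p s : ℝ) : ℝ :=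
  2 * (volume.real (ball (0 : Rn n) (3 / 2)) * (sphereArea n / (p * s)))

theorem measureReal_ball_mul (x₀ : Rn n) (hr : 0 < r) (t : ℝ) :
    volume.real (ball x₀ (r * t)) = r ^ n * volume.real (ball (0 : Rn n) t) := by
  rw [measureReal_def, Measure.addHaar_ball_mul_of_pos volume x₀ hr, ENNReal.toReal_mul,
    ENNReal.toReal_ofReal (by positivity), finrank_euclideanSpace_fin, measureReal_def]

theorem pow_mul_rpow_neg_eq (n : ℕ) (a : ℝ) (hr : 0 < r) (hR : 0 < R) :
    r ^ n * R ^ (-a) = r ^ (n - a) * (r / R) ^ a := by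
  rw [Real.rpow_sub hr, Real.rpow_natCast, Real.div_rpow hr.le hR.le, Real.rpow_neg hR.le]
  field_simp

theorem inv_toNNReal_half_pos (hr : 0 < r) : 0 < (r / 2).toNNReal⁻¹ :=
  inv_pos.mpr (Real.toNNReal_pos.mpr (half_pos hr))

theorem integral_nearMajorant_ball [NeZero n] (hp : 0 < p) (hs0 : 0 < s) (hs1 : s < 1)
    (hr : 0 < r) (x₀ : Rn n) :
    ∫ z, nearMajorant p (-n - p * s) (r / 2).toNNReal⁻¹ (ball x₀ (r * (3 / 2))) z =
      r ^ (n - p * s) * nearConst n p s := by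
  rw [integral_nearMajorant_Rn hp hs0 hs1 (inv_toNNReal_half_pos hr) measurableSet_ball
      measure_ball_lt_top.ne,
    measureReal_ball_mul x₀ hr, NNReal.coe_inv, Real.coe_toNNReal _ (half_pos hr).le, inv_div,
    Real.div_rpow zero_le_two hr.le, Real.rpow_sub hr, Real.rpow_natCast, nearConst]
  ring

theorem integral_farMajorant_ball [NeZero n] (hu : MemX n p s Ω u) (hp : 1 < p) (hs : 0 < s)
    (hR : 0 < R) (hRΩ : ball x₀ R ⊆ Ω) (hr : 0 < r) :
    ∫ z, farMajorant (ball x₀ (r * (3 / 2))) (tailDensity n p s (minusPart u) x₀ R) z =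
      r ^ (n - p * s) * farConst n p s *
        ((r / R) ^ (p * s) * tail n p s (minusPart u) x₀ R ^ (p - 1)) := by
  rw [integral_farMajorant measurableSet_ball measure_ball_lt_top.ne
      (hu.integrable_tailDensity_minusPart hp hs hR hRΩ),
    integral_tailDensity hp.ne' (by positivity) hR, measureReal_ball_mul x₀ hr, farConst]
  linear_combination 2 * volume.real (ball (0 : Rn n) (3 / 2)) * (sphereArea n / (p * s)) *
    tail n p s (minusPart u) x₀ R ^ (p - 1) * pow_mul_rpow_neg_eq n (p * s) hr hR

theorem integrable_pairingMajorant [NeZero n] (hu : MemX n p s Ω u) (hp : 1 < p) (hs0 : 0 < s)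
    (hs1 : s < 1) (C b : ℝ) (hL : 0 < L) (hR : 0 < R) (hRΩ : ball x₀ R ⊆ Ω) :
    Integrable (pairingMajorant n p s C b u x₀ r R L) :=
  ((integrable_nearMajorant_Rn (zero_lt_one.trans hp) hs0 hs1 hL measurableSet_ball
      measure_ball_lt_top.ne).const_mul _).add
    ((integrable_farMajorant measurableSet_ball measure_ball_lt_top.ne
      (hu.integrable_tailDensity_minusPart hp hs0 hR hRΩ)).const_mul _)

theorem integral_pairingMajorant [NeZero n] (hu : MemX n p s Ω u) (hp : 1 < p) (hs0 : 0 < s)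
    (hs1 : s < 1) (C : ℝ) (hb : 0 ≤ b) (hR : 0 < R) (hRΩ : ball x₀ R ⊆ Ω) (hr : 0 < r) :
    ∫ z, pairingMajorant n p s C b u x₀ r R (r / 2).toNNReal⁻¹ z =
      r ^ (n - p * s) * (2 ^ (p - 1) * C * nearConst n p s +
        2 ^ (p - 1) * C * 4 ^ (n + p * s) * farConst n p s *
          (1 / b ^ (p - 1) * (r / R) ^ (p * s) * tail n p s (minusPart u) x₀ R ^ (p - 1))) := by
  have hnear := integrable_nearMajorant_Rn (n := n) (zero_lt_one.trans hp) hs0 hs1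
    (inv_toNNReal_half_pos hr) (measurableSet_ball (x := x₀) (ε := r * (3 / 2)))
    measure_ball_lt_top.ne
  have hfar := integrable_farMajorant (measurableSet_ball (x := x₀) (ε := r * (3 / 2)))
    measure_ball_lt_top.ne (hu.integrable_tailDensity_minusPart hp hs0 hR hRΩ)
  have hb1 : b ^ (1 - p) = 1 / b ^ (p - 1) := by
    rw [← neg_sub, Real.rpow_neg hb, one_div]
  simp only [pairingMajorant]
  rw [integral_add (hnear.const_mul _) (hfar.const_mul _), integral_const_mul, integral_const_mul,
    integral_nearMajorant_ball (zero_lt_one.trans hp) hs0 hs1 hr,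
    integral_farMajorant_ball hu hp hs0 hR hRΩ hr, hb1]
  ring

/-- The factor of `r^{n-ps}` in the bound of `|B_{3r/2}|^{1-1/q}` for balls inside `Ω`. -/
def potentialConst (n : ℕ) (p s : ℝ) (Ω : Set (Rn n)) : ℝ :=
  volume.real (ball (0 : Rn n) (3 / 2)) ^ (1 - p * s / n) *
    max 1 (volume.real Ω) ^ (p * s / n)

theorem measureReal_ball_rpow_le [NeZero n] (hp : 0 < p * s) (hq : 0 < q) (hnq : n / (p * s) ≤ q)
    (hΩ : volume Ω ≠ ∞) (hr : 0 < r) (hB : ball x₀ (r * (3 / 2)) ⊆ Ω) :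
    volume.real (ball x₀ (r * (3 / 2))) ^ (1 - 1 / q) ≤
      potentialConst n p s Ω * r ^ (n - p * s) := by
  have hn : (0 : ℝ) < n := mod_cast NeZero.pos n
  have hball : 0 < volume.real (ball x₀ (r * (3 / 2))) :=
    ENNReal.toReal_pos (measure_ball_pos volume x₀ (by positivity)).ne' measure_ball_lt_top.ne
  have hexp : 1 / q ≤ p * s / n := by
    rw [div_le_iff₀ hp] at hnq
    rw [div_le_div_iff₀ hq hn]
    linarith
  have hr_pow : (r ^ n) ^ (1 - p * s / n) = r ^ (n - p * s) := by
    rw [← Real.rpow_natCast, ← Real.rpow_mul hr.le, mul_one_sub, mul_div_cancel₀ _ hn.ne']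
  calc volume.real (ball x₀ (r * (3 / 2))) ^ (1 - 1 / q)
      = volume.real (ball x₀ (r * (3 / 2))) ^ (1 - p * s / n) *
          volume.real (ball x₀ (r * (3 / 2))) ^ (p * s / n - 1 / q) := by
        rw [← Real.rpow_add hball, sub_add_sub_cancel]
    _ ≤ volume.real (ball x₀ (r * (3 / 2))) ^ (1 - p * s / n) *
          max 1 (volume.real Ω) ^ (p * s / n) := by
        refine mul_le_mul_of_nonneg_left ?_ (by positivity)
        refine (Real.rpow_le_rpow hball.le ((measureReal_mono hB hΩ).trans (le_max_right 1 _))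
          (sub_nonneg.mpr hexp)).trans ?_
        exact Real.rpow_le_rpow_of_exponent_le (le_max_left _ _)
          (sub_le_self _ (by positivity))
    _ = potentialConst n p s Ω * r ^ (n - p * s) := by
        rw [measureReal_ball_mul x₀ hr, Real.mul_rpow (by positivity) measureReal_nonneg, hr_pow,
          potentialConst]
        ring

/-- The constant `c₀` of the logarithmic estimate for kernels bounded by `C |y|^{-n-ps}`. -/
def logEstimateConst (n : ℕ) (p s C : ℝ) (Ω : Set (Rn n)) : ℝ :=
  (2 ^ (p - 1) * C * nearConst n p s + 2 ^ (p - 1) * C * 4 ^ (n + p * s) * farConst n p s +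
    potentialConst n p s Ω) / (p - 1)

theorem nearConst_nonneg (n : ℕ) (p s : ℝ) : 0 ≤ nearConst n p s := by
  have hkernel : 0 ≤ ∫ z : Rn n, truncKernel p (-n - p * s) 1 z :=
    integral_nonneg fun z ↦ truncKernel_nonneg p _ zero_le_one z
  unfold nearConst
  positivity

theorem farConst_nonneg (n : ℕ) (hps : 0 ≤ p * s) : 0 ≤ farConst n p s := by
  unfold farConst sphereArea
  positivity

theorem potentialConst_pos (n : ℕ) (p s : ℝ) (Ω : Set (Rn n)) : 0 < potentialConst n p s Ω := by
  have hball : 0 < volume.real (ball (0 : Rn n) (3 / 2)) :=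
    ENNReal.toReal_pos (measure_ball_pos volume _ (by norm_num)).ne' measure_ball_lt_top.ne
  exact mul_pos (Real.rpow_pos_of_pos hball _) (by positivity)

theorem logEstimateConst_pos (hp : 1 < p) (hs : 0 ≤ s) (hC : 0 ≤ C) :
    0 < logEstimateConst n p s C Ω := by
  have : 0 < p - 1 := by linarith
  have hnear := nearConst_nonneg n p s
  have hfar := farConst_nonneg n (mul_nonneg (zero_le_one.trans hp.le) hs)
  have hpot := potentialConst_pos n p s Ω
  unfold logEstimateConst
  positivity

theorem tail_nonneg (hps : 0 ≤ p * s) (u : Rn n → ℝ) (x₀ : Rn n) (hr : 0 ≤ r) :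
    0 ≤ tail n p s u x₀ r := by
  have : 0 ≤ ∫ y in (ball x₀ r)ᶜ, |u y| ^ (p - 1) * ‖y - x₀‖ ^ (-(n : ℝ) - p * s) :=
    integral_nonneg fun y ↦ by positivity
  unfold tail sphereArea
  positivity

theorem MemX.memY0_logTest [NeZero n] (hu : MemX n p s Ω u) (hp : 1 ≤ p) (hs0 : 0 < s)
    (hs1 : s < 1) (hΩ : volume Ω ≠ ∞) (hV : IntegrableOn (plusPart V) Ω)
    (hV_neg : IntegrableOn (minusPart V) Ω) (hb : 0 < b) (hψ : IsCutoff ψ L A B) (hL : 0 < L)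
    (hB : MeasurableSet B) (hBΩ : B ⊆ Ω) : MemY0 n p s Ω V (logTest p b ψ u) :=
  ⟨hu.memX0_logTest hp hs0 hs1 hΩ hb hψ hL hB hBΩ, memLpV_logTest hp hb hψ hu.1 hV hV_neg⟩

theorem HasKernelBound.integrableOn_logIntegrand_and_energy_le [NeZero n]
    (hK : HasKernelBound n p s C K) (hu : MemX n p s Ω u) (hp : 1 < p) (hs0 : 0 < s) (hs1 : s < 1)
    (hC : 0 ≤ C) (hb : 0 < b) (hr : 0 < r) (hrR : r ≤ R / 2) (hRΩ : ball x₀ R ⊆ Ω)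
    (hu_nonneg : ∀ x ∈ ball x₀ R, 0 ≤ u x)
    (hψ : IsCutoff ψ (r / 2).toNNReal⁻¹ (ball x₀ r) (ball x₀ (r * (3 / 2))))
    (hφ : MemX0 n p s Ω (logTest p b ψ u)) :
    IntegrableOn (logIntegrand p b K u) (ball x₀ r ×ˢ ball x₀ r) ∧
      pairing n p K u (logTest p b ψ u) +
          (p - 1) * ∫ z in ball x₀ r ×ˢ ball x₀ r, logIntegrand p b K u z ≤
        r ^ (n - p * s) * (2 ^ (p - 1) * C * nearConst n p s +
          2 ^ (p - 1) * C * 4 ^ (n + p * s) * farConst n p s *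
            (1 / b ^ (p - 1) * (r / R) ^ (p * s) * tail n p s (minusPart u) x₀ R ^ (p - 1))) := by
  have hR : 0 < R := by linarith
  have hint := hK.integrable_pairingIntegrand hp hC hu hφ
  have hlog := hK.integrableOn_logIntegrand hψ hp hb measurableSet_ball
    (fun x hx ↦ hu_nonneg x (ball_subset_ball (by linarith) hx)) hu.1 hint
  have henergy := hK.pairing_logTest_add_le hC hψ hp hs0.le hb hR hrR hu_nonneg hint hlog
    (integrable_pairingMajorant hu hp hs0 hs1 C b (inv_toNNReal_half_pos hr) hR hRΩ)
  exact ⟨hlog, henergy.trans_eq (integral_pairingMajorant hu hp hs0 hs1 C hb.le hR hRΩ hr)⟩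

theorem integral_potential_mul_logTest_le_lqNormOn [NeZero n] (hp : 1 < p) (hs : 0 < s)
    (hq : 1 ≤ q) (hnq : n / (p * s) ≤ q) (hΩ : volume Ω ≠ ∞) (hV : Measurable V)
    (hVq : IntegrableOn (fun x ↦ plusPart V x ^ q) Ω) (hb : 0 < b) (hr : 0 < r)
    (hBΩ : ball x₀ (r * (3 / 2)) ⊆ Ω) (hu : ∀ x ∈ ball x₀ (r * (3 / 2)), 0 ≤ u x)
    (hψ : IsCutoff ψ L A (ball x₀ (r * (3 / 2)))) :
    ∫ x, V x * (|u x| ^ (p - 2) * u x) * logTest p b ψ u x ≤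
      lqNormOn n q Ω (plusPart V) * (potentialConst n p s Ω * r ^ (n - p * s)) := by
  refine (integral_potential_mul_logTest_le hψ hp hb measurableSet_ball hu
    ((integrableOn_plusPart hq hΩ hV hVq).mono_set hBΩ)).trans ?_
  refine (setIntegral_plusPart_le_lqNormOn hq hΩ hBΩ hV hVq).trans ?_
  exact mul_le_mul_of_nonneg_left
    (measureReal_ball_rpow_le (by positivity) (by linarith) hnq hΩ hr hBΩ) (lqNormOn_nonneg _ _ _ _)

theorem le_logEstimateConst_mul {J P X ρ T N : ℝ} (hp : 1 < p) (hs : 0 ≤ s) (hC : 0 ≤ C)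
    (hρ : 0 ≤ ρ) (hT : 0 ≤ T) (hN : 0 ≤ N)
    (henergy : P + (p - 1) * J ≤ ρ * (2 ^ (p - 1) * C * nearConst n p s +
      2 ^ (p - 1) * C * 4 ^ (n + p * s) * farConst n p s * T))
    (hweak : 0 ≤ P + X) (hpot : X ≤ N * (potentialConst n p s Ω * ρ)) :
    J ≤ logEstimateConst n p s C Ω * ρ * (T + (1 + N)) := by
  have hp1 : 0 < p - 1 := by linarith
  have hnear := nearConst_nonneg n p s
  have hfar := farConst_nonneg n (mul_nonneg (zero_le_one.trans hp.le) hs)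
  have hpot_const := (potentialConst_pos n p s Ω).le
  set c₁ := 2 ^ (p - 1) * C * nearConst n p s
  set c₂ := 2 ^ (p - 1) * C * 4 ^ (n + p * s) * farConst n p s
  have hc₁ : 0 ≤ c₁ * ρ * (T + N) := by positivity
  have hc₂ : 0 ≤ c₂ * ρ * (1 + N) := by positivity
  have hc₃ : 0 ≤ potentialConst n p s Ω * ρ * (1 + T) := by positivity
  rw [logEstimateConst, div_mul_eq_mul_div, div_mul_eq_mul_div, le_div_iff₀ hp1]
  linarith

end Energy

end NLS

theorem logarithmic_estimate_general {n : ℕ} (hn : 1 ≤ n) {p s C : ℝ} (hp : 1 < p) (hs0 : 0 < s)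
    (hs1 : s < 1) (hC : 0 ≤ C) {Ω : Set (Rn n)} (hΩ : volume Ω ≠ ∞) :
    ∃ c₀ : ℝ, 0 < c₀ ∧
      ∀ q : ℝ, 1 ≤ q → (n : ℝ) / (p * s) ≤ q →
      ∀ V : Rn n → ℝ, Measurable V → IntegrableOn (fun x ↦ plusPart V x ^ q) Ω →
        IntegrableOn (minusPart V) Ω →
      ∀ K : Rn n → ℝ, HasKernelBound n p s C K →
      ∀ g u : Rn n → ℝ, WeakSupersolution n p s Ω K V g u →
      ∀ (x₀ : Rn n) (R : ℝ), ball x₀ R ⊆ Ω → (∀ x ∈ ball x₀ R, 0 ≤ u x) →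
      ∀ b : ℝ, 0 < b → ∀ r : ℝ, 0 < r → r ≤ R / 2 →
        IntegrableOn (logIntegrand p b K u) (ball x₀ r ×ˢ ball x₀ r) ∧
        ∫ z in ball x₀ r ×ˢ ball x₀ r, logIntegrand p b K u z ≤
          c₀ * r ^ ((n : ℝ) - p * s) *
            (1 / b ^ (p - 1) * (r / R) ^ (p * s) * tail n p s (minusPart u) x₀ R ^ (p - 1) +
              (1 + lqNormOn n q Ω (plusPart V))) := by
  have : NeZero n := ⟨by omega⟩
  refine ⟨logEstimateConst n p s C Ω, logEstimateConst_pos hp hs0.le hC, ?_⟩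
  intro q hq hnq V hV hVpos hVneg K hK g u hsup x₀ R hRΩ hu b hb r hr hrR
  obtain ⟨ψ, hψ⟩ := exists_isCutoff_ball x₀ hr
  have hps : 0 ≤ p * s := by positivity
  have hR : 0 ≤ R := by linarith
  have hBR : ball x₀ (r * (3 / 2)) ⊆ ball x₀ R := ball_subset_ball (by linarith)
  have huX : MemX n p s Ω u := hsup.1.1.1
  have hφ := huX.memY0_logTest hp.le hs0 hs1 hΩ (integrableOn_plusPart hq hΩ hV hVpos) hVneg hb hψ
    (inv_toNNReal_half_pos hr) measurableSet_ball (hBR.trans hRΩ)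
  have hweak := hsup.2 _ hφ fun x ↦ logTest_nonneg p hb.le (hψ.mem_Icc x).1
  obtain ⟨hlog, henergy⟩ := hK.integrableOn_logIntegrand_and_energy_le huX hp hs0 hs1 hC hb hr hrR
    hRΩ hu hψ hφ.1
  have hpot := integral_potential_mul_logTest_le_lqNormOn hp hs0 hq hnq hΩ hV hVpos hb hr
    (hBR.trans hRΩ) (fun x hx ↦ hu x (hBR hx)) hψ
  have htail := tail_nonneg hps (minusPart u) x₀ hR
  exact ⟨hlog, le_logEstimateConst_mul hp hs0.le hC (by positivity) (by positivity)
    (lqNormOn_nonneg _ _ _ _) henergy hweak hpot⟩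

/-- logarithmic estimate for weak supersolutions (Theorem 1.2). -/
theorem logarithmic_estimate
    (n : ℕ) (hn : 1 ≤ n) (p s lam Lam : ℝ)
    (hp : 1 < p) (hs0 : 0 < s) (hs1 : s < 1)
    (hlam : 0 < lam) (hlamLam : lam ≤ Lam)
    (Ω : Set (Rn n)) (hΩopen : IsOpen Ω) (hΩconn : IsConnected Ω)
    (hΩbdd : Bornology.IsBounded Ω) :
    ∃ c₀ : ℝ, 0 < c₀ ∧
      ∀ q : ℝ, (n : ℝ) / (p * s) < q → 1 < (n : ℝ) / (p * s) →
      ∀ V : Rn n → ℝ, IsPotential n p s q V →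
      ∀ g : Rn n → ℝ, MemWsp n p s Set.univ g →
      ∀ K : Rn n → ℝ, KernelClass n p s lam Lam K →
      ∀ u : Rn n → ℝ, WeakSupersolution n p s Ω K V g u →
      ∀ (x₀ : Rn n) (R : ℝ), 0 < R → Metric.ball x₀ R ⊆ Ω →
        (∀ x ∈ Metric.ball x₀ R, 0 ≤ u x) →
      ∀ b : ℝ, 0 < b → b < 1 → ∀ r : ℝ, 0 < r → r < R / 2 →
        (∫ z in (Metric.ball x₀ r) ×ˢ (Metric.ball x₀ r),
            |Real.log ((u z.1 + b) / (u z.2 + b))| ^ p * K (z.1 - z.2)) ≤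
          c₀ * r ^ ((n : ℝ) - p * s) *
            (1 / b ^ (p - 1) * (r / R) ^ (p * s) * tail n p s (minusPart u) x₀ R ^ (p - 1) +
              (1 + lqNormOn n q Ω (plusPart V))) := by
  have hbdd {f : Rn n → ℝ} (hf : LocallyIntegrable f) : IntegrableOn f Ω :=
    (hf.integrableOn_isCompact hΩbdd.isCompact_closure).mono_set subset_closure
  have hC : 0 ≤ cnps n p s * Lam :=
    mul_nonneg (cnps_pos n (by linarith) hs1).le (hlam.le.trans hlamLam)
  obtain ⟨c₀, hc₀, hest⟩ :=
    logarithmic_estimate_general hn hp hs0 hs1 hC hΩbdd.measure_lt_top.ne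
  exact ⟨c₀, hc₀, fun q hq hq1 V hV g _ K hK u hu x₀ R _ hR hu0 b hb _ r hr hrR ↦
    (hest q (hq1.trans hq).le hq.le V hV.measurable (hbdd hV.plusPart_locLq)
      (hbdd hV.minusPart_locInt) K (hK.hasKernelBound (by linarith) hs1 hlam.le) g u hu x₀ R hR
      hu0 b hb r hr hrR.le).2⟩
end
end

section
/- Let p > 1 and set c_p = (p−1)^{p−1}/2. Then for all α, β ∈ ℝ and all A, B ≥ 0: |β−α|^{p−2}·(β−α)·(β·B^p − α·A^p) ≥ −c_p·(|α|+|β|)^p·|B−A|^p (where the expression |β−α|^{p−2}(β−α) is interpreted as 0 when α = β). -/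
/-!
The claimed lower bound is nonpositive, so only the case where the other side is negative matters.
Up to the symmetries `(α, A) ↔ (β, B)` and `(α, β, A, B) ↦ (-β, -α, B, A)` this forces `0 < α < β`
and `B < A`. There convexity of `x ↦ x ^ p`, in the form of Radon's inequality for
`A = B + (A - B)` with weights `u` and `β - α`, gives
`A ^ p ≤ (u + (β - α)) ^ (p - 1) * (B ^ p / u ^ (p - 1) + (A - B) ^ p / (β - α) ^ (p - 1))`.
It remains to choose `u` so that `α * (u + (β - α)) ^ (p - 1)` is at most `β * u ^ (p - 1)` and at
most `(p - 1) ^ (p - 1) / 2 * (α + β) ^ p`. The total weight `u + (β - α)` can be taken to be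
`(p - 1) * β` for `2 ≤ p` and `(p - 1) * α + (β - α)` for `p ≤ 2`; both requirements then follow
from Bernoulli's inequality and elementary comparisons.
-/

section Bernoulli

variable {s x y : ℝ}

theorem one_add_sub_div_rpow_mul_rpow (hx : 0 ≤ x) (hy : 0 < y) :
    (1 + (x - y) / y) ^ s * y ^ s = x ^ s := by
  have hxy : 1 + (x - y) / y = x / y := by field_simp; ring
  rw [hxy, ← Real.mul_rpow (by positivity) hy.le, div_mul_cancel₀ x hy.ne']

theorem neg_one_le_sub_div (hx : 0 ≤ x) (hy : 0 < y) : -1 ≤ (x - y) / y := by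
  rw [le_div_iff₀ hy]
  linarith

theorem add_mul_sub_mul_rpow_le_mul_rpow (hs : 1 ≤ s) (hx : 0 ≤ x) (hy : 0 < y) :
    (y + s * (x - y)) * y ^ s ≤ y * x ^ s := by
  have bernoulli := one_add_mul_self_le_rpow_one_add (neg_one_le_sub_div hx hy) hs
  calc (y + s * (x - y)) * y ^ s
      = y * ((1 + s * ((x - y) / y)) * y ^ s) := by field_simp
    _ ≤ y * ((1 + (x - y) / y) ^ s * y ^ s) := by gcongr
    _ = y * x ^ s := by rw [one_add_sub_div_rpow_mul_rpow hx hy]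

theorem mul_rpow_le_add_mul_sub_mul_rpow (hs₀ : 0 ≤ s) (hs₁ : s ≤ 1) (hx : 0 ≤ x) (hy : 0 < y) :
    y * x ^ s ≤ (y + s * (x - y)) * y ^ s := by
  have bernoulli := rpow_one_add_le_one_add_mul_self (neg_one_le_sub_div hx hy) hs₀ hs₁
  calc y * x ^ s
      = y * ((1 + (x - y) / y) ^ s * y ^ s) := by rw [one_add_sub_div_rpow_mul_rpow hx hy]
    _ ≤ y * ((1 + s * ((x - y) / y)) * y ^ s) := by gcongr
    _ = (y + s * (x - y)) * y ^ s := by field_simp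

end Bernoulli

theorem radon_inequality_two_terms {p a b u v : ℝ} (hp : 1 ≤ p)
    (ha : 0 ≤ a) (hb : 0 ≤ b) (hu : 0 < u) (hv : 0 < v) :
    (a + b) ^ p ≤ (u + v) ^ (p - 1) * (a ^ p / u ^ (p - 1) + b ^ p / v ^ (p - 1)) := by
  have rpow_eq {w : ℝ} (hw : 0 < w) : w ^ p = w ^ (p - 1) * w := by
    rw [← Real.rpow_add_one hw.ne', sub_add_cancel]
  have huv : 0 < u + v := add_pos hu hv
  have mean : u / (u + v) * (a / u) + v / (u + v) * (b / v) = (a + b) / (u + v) := by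
    field_simp
  have jensen : ((a + b) / (u + v)) ^ p ≤
      u / (u + v) * (a / u) ^ p + v / (u + v) * (b / v) ^ p := by
    rw [← mean]
    exact (convexOn_rpow hp).2 (div_nonneg ha hu.le) (div_nonneg hb hv.le) (by positivity)
      (by positivity) (by field_simp)
  rw [Real.div_rpow (by positivity) huv.le, div_le_iff₀ (by positivity),
    Real.div_rpow ha hu.le, Real.div_rpow hb hv.le] at jensen
  refine jensen.trans_eq ?_
  rw [rpow_eq hu, rpow_eq hv, rpow_eq huv]
  field_simp

section RadonWeight

variable {s a b : ℝ}

theorem exists_radon_weight_of_one_le (hs : 1 ≤ s) (ha : 0 < a) (hab : a ≤ b) :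
    ∃ u, 0 < u ∧ a * (u + (b - a)) ^ s ≤ b * u ^ s ∧
      a * (u + (b - a)) ^ s ≤ s ^ s / 2 * (a + b) ^ (s + 1) := by
  have hs₀ : 0 < s := by positivity
  have hb : 0 < b := ha.trans_le hab
  have hu : 0 < s * b - (b - a) := by nlinarith
  refine ⟨s * b - (b - a), hu, ?_, ?_⟩ <;> rw [sub_add_cancel]
  · have tangent := add_mul_sub_mul_rpow_le_mul_rpow hs hu.le (mul_pos hs₀ hb)
    refine le_of_mul_le_mul_left ?_ hs₀
    linear_combination tangent
  · calc a * (s * b) ^ s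
        = s ^ s * (a * b ^ s) := by rw [Real.mul_rpow hs₀.le hb.le]; ring
      _ ≤ s ^ s * ((a + b) / 2 * (a + b) ^ s) := by gcongr <;> linarith
      _ = s ^ s / 2 * (a + b) ^ (s + 1) := by rw [Real.rpow_add_one (by positivity)]; ring

theorem exists_radon_weight_of_le_one (hs₀ : 0 < s) (hs₁ : s ≤ 1) (ha : 0 < a) (hab : a ≤ b) :
    ∃ u, 0 < u ∧ a * (u + (b - a)) ^ s ≤ b * u ^ s ∧
      a * (u + (b - a)) ^ s ≤ s ^ s / 2 * (a + b) ^ (s + 1) := by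
  have hb : 0 < b := ha.trans_le hab
  have hu : 0 < s * a := mul_pos hs₀ ha
  have hw : 0 ≤ s * a + (b - a) := by linarith
  refine ⟨s * a, hu, ?_, ?_⟩
  · have tangent := mul_rpow_le_add_mul_sub_mul_rpow hs₀.le hs₁ hw hu
    refine le_of_mul_le_mul_left ?_ hs₀
    linear_combination tangent
  · have hab₀ : 0 < a + b := add_pos ha hb
    have tangent : (a + b) * (s * a + (b - a)) ^ s ≤ (2 - s) * b * (s * (a + b)) ^ s := by
      have scaled := mul_rpow_le_add_mul_sub_mul_rpow hs₀.le hs₁ hw (mul_pos hs₀ hab₀)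
      refine le_of_mul_le_mul_left ?_ hs₀
      linear_combination scaled
    have amgm : a * ((2 - s) * b) ≤ (a + b) ^ 2 / 2 := by
      nlinarith [sq_nonneg (a - b), mul_pos hs₀ (mul_pos ha hb)]
    refine le_of_mul_le_mul_left ?_ hab₀
    calc (a + b) * (a * (s * a + (b - a)) ^ s)
        = a * ((a + b) * (s * a + (b - a)) ^ s) := by ring
      _ ≤ a * ((2 - s) * b * (s * (a + b)) ^ s) := by gcongr
      _ = a * ((2 - s) * b) * (s * (a + b)) ^ s := by ring
      _ ≤ (a + b) ^ 2 / 2 * (s * (a + b)) ^ s := by gcongr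
      _ = (a + b) * (s ^ s / 2 * (a + b) ^ (s + 1)) := by
        rw [Real.mul_rpow hs₀.le hab₀.le, Real.rpow_add_one hab₀.ne']; ring

theorem exists_radon_weight (hs : 0 < s) (ha : 0 < a) (hab : a ≤ b) :
    ∃ u, 0 < u ∧ a * (u + (b - a)) ^ s ≤ b * u ^ s ∧
      a * (u + (b - a)) ^ s ≤ s ^ s / 2 * (a + b) ^ (s + 1) :=
  (le_total 1 s).elim (exists_radon_weight_of_one_le · ha hab)
    (exists_radon_weight_of_le_one hs · ha hab)

end RadonWeight

section RpowDifference

variable {p α β A B : ℝ}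

theorem sub_rpow_mul_sub_mul_rpow_le_of_pos (hp : 1 < p) (hα : 0 < α) (hαβ : α < β) (hB : 0 ≤ B)
    (hBA : B ≤ A) :
    (β - α) ^ (p - 1) * (α * A ^ p - β * B ^ p) ≤
      (p - 1) ^ (p - 1) / 2 * (α + β) ^ p * (A - B) ^ p := by
  obtain ⟨u, hu, hcoeffB, hcoeffSub⟩ := exists_radon_weight (sub_pos.2 hp) hα hαβ.le
  rw [sub_add_cancel] at hcoeffSub
  have hv : 0 < β - α := sub_pos.2 hαβ
  have ht : 0 ≤ A - B := sub_nonneg.2 hBA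
  have radon := radon_inequality_two_terms hp.le hB ht hu hv
  rw [add_sub_cancel] at radon
  have weighted_bound : α * A ^ p ≤ β * B ^ p +
      (p - 1) ^ (p - 1) / 2 * (α + β) ^ p * ((A - B) ^ p / (β - α) ^ (p - 1)) := by
    calc α * A ^ p
        ≤ α * ((u + (β - α)) ^ (p - 1) *
            (B ^ p / u ^ (p - 1) + (A - B) ^ p / (β - α) ^ (p - 1))) := by gcongr
      _ = α * (u + (β - α)) ^ (p - 1) * (B ^ p / u ^ (p - 1)) +
            α * (u + (β - α)) ^ (p - 1) * ((A - B) ^ p / (β - α) ^ (p - 1)) := by ring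
      _ ≤ β * u ^ (p - 1) * (B ^ p / u ^ (p - 1)) +
            (p - 1) ^ (p - 1) / 2 * (α + β) ^ p * ((A - B) ^ p / (β - α) ^ (p - 1)) := by gcongr
      _ = _ := by field_simp
  rw [mul_comm, ← le_div_iff₀ (by positivity), mul_div_assoc]
  exact sub_le_iff_le_add'.2 weighted_bound

theorem sub_rpow_mul_sub_mul_rpow_le (hp : 1 < p) (hαβ : α < β) (hA : 0 ≤ A) (hB : 0 ≤ B) :
    (β - α) ^ (p - 1) * (α * A ^ p - β * B ^ p) ≤
      (p - 1) ^ (p - 1) / 2 * (|α| + |β|) ^ p * |B - A| ^ p := by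
  rcases le_or_gt (α * A ^ p) (β * B ^ p) with hle | hlt
  · have : 0 < p - 1 := sub_pos.2 hp
    calc (β - α) ^ (p - 1) * (α * A ^ p - β * B ^ p)
        ≤ 0 := mul_nonpos_of_nonneg_of_nonpos
          (Real.rpow_nonneg (sub_nonneg.2 hαβ.le) _) (sub_nonpos.2 hle)
      _ ≤ _ := by positivity
  rcases le_or_gt α 0 with hα | hα
  · have hβ : β < 0 := by
      by_contra! hβ
      exact hlt.not_ge ((mul_nonpos_of_nonpos_of_nonneg hα (by positivity)).trans (by positivity))
    have hAB : A ≤ B := by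
      by_contra! hBA
      refine hlt.not_ge ?_
      calc α * A ^ p ≤ β * A ^ p := by gcongr
        _ ≤ β * B ^ p := mul_le_mul_of_nonpos_left (by gcongr) hβ.le
    have reflected := sub_rpow_mul_sub_mul_rpow_le_of_pos hp (neg_pos.2 hβ) (neg_lt_neg hαβ) hA hAB
    rw [neg_sub_neg] at reflected
    rw [abs_of_nonpos hα, abs_of_neg hβ, abs_of_nonneg (sub_nonneg.2 hAB), add_comm (-α)]
    linear_combination reflected
  · have hBA : B ≤ A := by
      by_contra! hAB
      have hβ : 0 ≤ β := hα.le.trans hαβ.le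
      exact hlt.not_ge (by gcongr)
    rw [abs_of_pos hα, abs_of_pos (hα.trans hαβ), abs_sub_comm, abs_of_nonneg (sub_nonneg.2 hBA)]
    exact sub_rpow_mul_sub_mul_rpow_le_of_pos hp hα hαβ hB hBA

end RpowDifference

theorem abs_rpow_sub_two_mul_self {x : ℝ} (hx : 0 < x) (p : ℝ) :
    |x| ^ (p - 2) * x = x ^ (p - 1) := by
  rw [abs_of_pos hx, ← Real.rpow_add_one hx.ne']
  ring_nf

/-- elementary inequality (a) of Lemma 2.4. -/
theorem elementary_inequality_a (p : ℝ) (hp : 1 < p) (α β A B : ℝ)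
    (hA : 0 ≤ A) (hB : 0 ≤ B) :
    -((p - 1) ^ (p - 1) / 2) * (|α| + |β|) ^ p * |B - A| ^ p ≤
      |β - α| ^ (p - 2) * (β - α) * (β * B ^ p - α * A ^ p) := by
  wlog hαβ : α ≤ β generalizing α β A B
  · have swapped := this β α B A hB hA (le_of_not_ge hαβ)
    rw [abs_sub_comm A B, abs_sub_comm α β, add_comm |β| |α|] at swapped
    linear_combination swapped
  rcases hαβ.eq_or_lt with rfl | hlt
  · rw [sub_self, mul_zero, zero_mul, neg_mul, neg_mul, neg_nonpos]
    have : 0 < p - 1 := sub_pos.2 hp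
    positivity
  · rw [abs_rpow_sub_two_mul_self (sub_pos.2 hlt)]
    linear_combination sub_rpow_mul_sub_mul_rpow_le hp hlt hA hB
end

section
/- Let p > 1 and set d_p = (1/2)·(2(p−1))^{p−1}. Then for all α, β ∈ ℝ with β ≥ α and all A, B ≥ 0: (β−α)^{p−1}·(β·B^p − α·A^p) ≥ (1/4)·(β−α)^p·(A^p + B^p) − d_p·(|α|+|β|)^p·|B−A|^p. -/
/- Write `β * B ^ p - α * A ^ p` as the main term `(β - α) / 2 * (A ^ p + B ^ p)` plus the cross
term `(α + β) / 2 * (B ^ p - A ^ p)`. By convexity of the power, `|B ^ p - A ^ p|` is at most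
`p * max A B ^ (p - 1) * |B - A|`, and Young's inequality with a free parameter `c` bounds the cross
term by a multiple of `(β - α) ^ p * max A B ^ p` plus a multiple of `|B - A| ^ p`. For
`c = 2 * (p - 1)` half of the main term absorbs the former. -/

section RpowInequalities

variable {p a b c x y : ℝ}

theorem rpow_eq_rpow_sub_one_mul (hx : 0 ≤ x) (hp : p ≠ 0) : x ^ p = x ^ (p - 1) * x := by
  rw [← Real.rpow_add_one' hx (by simpa using hp), sub_add_cancel]

theorem young_inequality_rpow_sub_one (hp : 1 ≤ p) (hx : 0 ≤ x) (hy : 0 ≤ y) :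
    p * (x ^ (p - 1) * y) ≤ (p - 1) * x ^ p + y ^ p := by
  have hp₀ : 0 < p := by linarith
  have hAMGM := Real.geom_mean_le_arith_mean2_weighted (div_nonneg (sub_nonneg.2 hp) hp₀.le)
    (inv_nonneg.2 hp₀.le) (Real.rpow_nonneg hx p) (Real.rpow_nonneg hy p) (by field_simp; ring)
  rw [← Real.rpow_mul hx, mul_div_cancel₀ _ hp₀.ne', Real.rpow_rpow_inv hy hp₀.ne'] at hAMGM
  calc p * (x ^ (p - 1) * y) ≤ p * ((p - 1) / p * x ^ p + p⁻¹ * y ^ p) := by gcongr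
    _ = (p - 1) * x ^ p + y ^ p := by field_simp

theorem young_inequality_rpow_sub_one_scaled (hp : 1 ≤ p) (hc : 0 < c) (hx : 0 ≤ x) (hy : 0 ≤ y) :
    p * (x ^ (p - 1) * y) ≤ (p - 1) / c * x ^ p + c ^ (p - 1) * y ^ p := by
  calc p * (x ^ (p - 1) * y) = c ^ (p - 1) * (p * ((x / c) ^ (p - 1) * y)) := by
        rw [Real.div_rpow hx hc.le]
        field_simp
    _ ≤ c ^ (p - 1) * ((p - 1) * (x / c) ^ p + y ^ p) := by
        gcongr
        exact young_inequality_rpow_sub_one hp (by positivity) hy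
    _ = (p - 1) / c * x ^ p + c ^ (p - 1) * y ^ p := by
        rw [Real.div_rpow hx hc.le, Real.rpow_sub_one hc.ne']
        field_simp

theorem rpow_sub_rpow_le_mul_sub (hp : 1 ≤ p) (ha : 0 ≤ a) (hb : 0 ≤ b) :
    b ^ p - a ^ p ≤ p * b ^ (p - 1) * (b - a) := by
  linear_combination young_inequality_rpow_sub_one hp hb ha +
    p * rpow_eq_rpow_sub_one_mul hb (by linarith : p ≠ 0)

theorem abs_rpow_sub_rpow_le (hp : 1 ≤ p) (ha : 0 ≤ a) (hb : 0 ≤ b) :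
    |b ^ p - a ^ p| ≤ p * max a b ^ (p - 1) * |b - a| := by
  wlog hab : a ≤ b generalizing a b
  · rw [abs_sub_comm, max_comm, abs_sub_comm b]
    exact this hb ha (le_of_not_ge hab)
  have hpow : a ^ p ≤ b ^ p := by gcongr
  rw [abs_of_nonneg (sub_nonneg.2 hpow), abs_of_nonneg (sub_nonneg.2 hab), max_eq_right hab]
  exact rpow_sub_rpow_le_mul_sub hp ha hb

theorem rpow_sub_one_mul_abs_rpow_sub_rpow_le (hp : 1 ≤ p) (hc : 0 < c) (hx : 0 ≤ x) (hy : 0 ≤ y)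
    (ha : 0 ≤ a) (hb : 0 ≤ b) :
    x ^ (p - 1) * (y * |b ^ p - a ^ p|) ≤
      (p - 1) / c * (x ^ p * max a b ^ p) + c ^ (p - 1) * (y ^ p * |b - a| ^ p) := by
  have hmax : 0 ≤ max a b := le_max_of_le_left ha
  calc x ^ (p - 1) * (y * |b ^ p - a ^ p|)
      ≤ x ^ (p - 1) * (y * (p * max a b ^ (p - 1) * |b - a|)) := by
        gcongr
        exact abs_rpow_sub_rpow_le hp ha hb
    _ = p * ((x * max a b) ^ (p - 1) * (y * |b - a|)) := by
        rw [Real.mul_rpow hx hmax]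
        ring
    _ ≤ (p - 1) / c * (x * max a b) ^ p + c ^ (p - 1) * (y * |b - a|) ^ p :=
        young_inequality_rpow_sub_one_scaled hp hc (by positivity) (by positivity)
    _ = (p - 1) / c * (x ^ p * max a b ^ p) + c ^ (p - 1) * (y ^ p * |b - a| ^ p) := by
        rw [Real.mul_rpow hx hmax, Real.mul_rpow hy (abs_nonneg _)]

theorem max_rpow_le_rpow_add_rpow (hp : 0 ≤ p) (ha : 0 ≤ a) (hb : 0 ≤ b) :
    max a b ^ p ≤ a ^ p + b ^ p := by
  rw [Real.rpow_max ha hb hp]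
  exact max_le_add_of_nonneg (by positivity) (by positivity)

end RpowInequalities

theorem neg_abs_add_abs_mul_abs_le (a b t : ℝ) : -((|a| + |b|) * |t|) ≤ (a + b) * t := by
  refine neg_le_of_abs_le ?_
  rw [abs_mul]
  gcongr
  exact abs_add_le a b

/-- elementary inequality (b) of Lemma 2.4. -/
theorem elementary_inequality_b (p : ℝ) (hp : 1 < p) (α β A B : ℝ)
    (hαβ : α ≤ β) (hA : 0 ≤ A) (hB : 0 ≤ B) :
    1 / 4 * (β - α) ^ p * (A ^ p + B ^ p) -
        (1 / 2) * (2 * (p - 1)) ^ (p - 1) * (|α| + |β|) ^ p * |B - A| ^ p ≤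
      (β - α) ^ (p - 1) * (β * B ^ p - α * A ^ p) := by
  have hD : 0 ≤ β - α := sub_nonneg.2 hαβ
  have hp' : 0 < p - 1 := sub_pos.2 hp
  have hdecomp : (β - α) ^ (p - 1) * (β * B ^ p - α * A ^ p) =
      1 / 2 * ((β - α) ^ p * (A ^ p + B ^ p)) +
        1 / 2 * ((β - α) ^ (p - 1) * ((α + β) * (B ^ p - A ^ p))) := by
    rw [rpow_eq_rpow_sub_one_mul hD (by linarith : p ≠ 0)]
    ring
  have hcross : -((β - α) ^ (p - 1) * ((|α| + |β|) * |B ^ p - A ^ p|)) ≤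
      (β - α) ^ (p - 1) * ((α + β) * (B ^ p - A ^ p)) := by
    rw [← mul_neg]
    gcongr
    exact neg_abs_add_abs_mul_abs_le α β _
  have hyoung := rpow_sub_one_mul_abs_rpow_sub_rpow_le hp.le (mul_pos two_pos hp') hD
    (add_nonneg (abs_nonneg α) (abs_nonneg β)) hA hB
  rw [div_mul_cancel_right₀ hp'.ne'] at hyoung
  have hmax : (β - α) ^ p * max A B ^ p ≤ (β - α) ^ p * (A ^ p + B ^ p) := by
    gcongr
    exact max_rpow_le_rpow_add_rpow (by linarith) hA hB
  linarith
end

section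
/- Let p > 1 and set b_p = 1 if 1 < p ≤ 2 and b_p = 2^{−(p−1)} if p > 2. Then for all real numbers A ≥ B ≥ 0: (A−B)^{p−1} ≥ b_p·A^{p−1} − B^{p−1}. -/
/-!
With `a = A - B`, `b = B` and `q = p - 1` the claim reads `c * (a + b) ^ q ≤ a ^ q + b ^ q`. For
`q ≤ 1` the power function is subadditive on the nonnegative reals, so `c = 1` works. For `1 ≤ q` it
is convex, and comparing its value at the midpoint of `a` and `b` with the mean of its values gives
`c = 2 ^ (1 - q)`, which is attained at `a = b` and is twice the constant `2 ^ (-q)` claimed.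
-/

theorem add_rpow_le_add_rpow_of_le_one {q a b : ℝ} (ha : 0 ≤ a) (hb : 0 ≤ b) (hq : q ≤ 1) :
    (a + b) ^ q ≤ a ^ q + b ^ q := by
  rcases le_total 0 q with hq_nonneg | hq_nonpos
  · exact Real.rpow_add_le_add_rpow ha hb hq_nonneg hq
  rcases ha.eq_or_lt with rfl | ha_pos
  · -- For `q < 0` this only uses that the junk value `0 ^ q` is nonnegative.
    simpa only [zero_add] using le_add_of_nonneg_left (Real.rpow_nonneg le_rfl q)
  · calc
      (a + b) ^ q ≤ a ^ q :=
        Real.rpow_le_rpow_of_nonpos ha_pos (le_add_of_nonneg_right hb) hq_nonpos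
      _ ≤ a ^ q + b ^ q := le_add_of_nonneg_right (Real.rpow_nonneg hb q)

theorem rpow_add_le_two_rpow_mul_rpow_add_rpow {q a b : ℝ} (ha : 0 ≤ a) (hb : 0 ≤ b)
    (hq : 1 ≤ q) : (a + b) ^ q ≤ 2 ^ (q - 1) * (a ^ q + b ^ q) := by
  lift a to NNReal using ha
  lift b to NNReal using hb
  exact_mod_cast NNReal.rpow_add_le_mul_rpow_add_rpow a b hq

theorem two_rpow_one_sub_mul_add_rpow_le {q a b : ℝ} (ha : 0 ≤ a) (hb : 0 ≤ b) (hq : 1 ≤ q) :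
    2 ^ (1 - q) * (a + b) ^ q ≤ a ^ q + b ^ q := by
  rw [← neg_sub q 1, Real.rpow_neg zero_le_two]
  exact inv_mul_le_of_le_mul₀ (by positivity) (by positivity)
    (rpow_add_le_two_rpow_mul_rpow_add_rpow ha hb hq)

theorem elementary_inequality_c_general (p : ℝ) {A B : ℝ} (hB : 0 ≤ B) (hBA : B ≤ A) :
    (if p ≤ 2 then (1 : ℝ) else 2 ^ (1 - (p - 1))) * A ^ (p - 1) - B ^ (p - 1) ≤
      (A - B) ^ (p - 1) := by
  have hAB : 0 ≤ A - B := sub_nonneg.2 hBA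
  rw [sub_le_iff_le_add]
  split_ifs with hp
  · have subadditivity := add_rpow_le_add_rpow_of_le_one hAB hB (show p - 1 ≤ 1 by linarith)
    rwa [sub_add_cancel, ← one_mul (A ^ (p - 1))] at subadditivity
  · have convexity := two_rpow_one_sub_mul_add_rpow_le hAB hB (show 1 ≤ p - 1 by linarith)
    rwa [sub_add_cancel] at convexity

/-- elementary inequality (c) of Lemma 2.4. -/
theorem elementary_inequality_c (p : ℝ) (hp : 1 < p) (A B : ℝ)
    (hB : 0 ≤ B) (hBA : B ≤ A) :
    (if p ≤ 2 then (1 : ℝ) else 2 ^ (-(p - 1))) * A ^ (p - 1) - B ^ (p - 1) ≤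
      (A - B) ^ (p - 1) := by
  refine le_trans ?_ (elementary_inequality_c_general p hB hBA)
  have hA : 0 ≤ A := hB.trans hBA
  gcongr ?_ * _ - _
  split_ifs
  · rfl
  · gcongr <;> linarith
end
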